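/- arXiv:1412.6034 — 2 statements merged into one kernel-verified Lean document; each statement's English description precedes it below -/
import Mathlib

section
/- If an FT3S system is FT3S strongly hyperbolic, then it admits a strongly hyperbolic FT2S reduction. Precisely: there exist a choice of reduction parameters (one may take (D^u)^j = -(A^u_u)^j, D_a^j = -B^u_{1u} delta_a^j, (D^v)^j = -(B^v_{1u})^j, (D^w)^{pj} = -(B^w_{1u})^{pj}, (Dbar^u) = 0, (Dbar^v) = 0, (Dbar^w) = 0, and Dbar_a^{jb} = i*lambda*epsilon_a^{jb} with epsilon the Levi-Civita symbol and lambda a sufficiently large real number, larger than sup over unit s of the operator norm of P3(s)) and a constant K > 0 such that for every unit s in R^3 there is an invertible matrix T2(s) with ||T2(s)|| <= K, ||T2(s)^{-1}|| <= K and T2(s)^{-1} P2(s) T2(s) a real diagonal matrix; in particular the system is FT2S strongly hyperbolic. -/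
open Matrix
open scoped ComplexOrder

/-- The Loewner order `A ≤ B` for complex matrices: `B - A` is positive semidefinite. -/
def loewnerLE {n : Type*} [Fintype n] (A B : Matrix n n ℂ) : Prop := (B - A).PosSemidef

/-- The spectral (ℓ²-operator) norm of a complex matrix. -/
noncomputable def matOpNorm {n : Type*} [Fintype n] [DecidableEq n] (M : Matrix n n ℂ) : ℝ :=
  ‖Matrix.toEuclideanCLM (𝕜 := ℂ) M‖

/-- The Levi-Civita symbol on three indices with `lev 0 1 2 = 1`. -/
noncomputable def lev (a b c : Fin 3) : ℝ :=
  if (a, b, c) = (0, 1, 2) ∨ (a, b, c) = (1, 2, 0) ∨ (a, b, c) = (2, 0, 1) then 1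
  else if (a, b, c) = (2, 1, 0) ∨ (a, b, c) = (0, 2, 1) ∨ (a, b, c) = (1, 0, 2) then -1
  else 0

/-- Index type for the FT3S state `(u, v, w)`. -/
abbrev I3 (nu nv nw : ℕ) : Type := Fin nu ⊕ (Fin nv ⊕ Fin nw)

/-- Index type for the FT2S reduction state `(u, d_a, v, w)`. -/
abbrev I2 (nu nv nw : ℕ) : Type := Fin nu ⊕ ((Fin 3 × Fin nu) ⊕ (Fin nv ⊕ Fin nw))

variable {nu nv nw : ℕ}
  (Auu : Fin 3 → Matrix (Fin nu) (Fin nu) ℂ) (Auv : Matrix (Fin nu) (Fin nv) ℂ)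
  (Bu1u : Matrix (Fin nu) (Fin nu) ℂ)
  (Avu : Fin 3 → Fin 3 → Matrix (Fin nv) (Fin nu) ℂ)
  (Avv : Fin 3 → Matrix (Fin nv) (Fin nv) ℂ)
  (Avw : Matrix (Fin nv) (Fin nw) ℂ) (Bv1u : Fin 3 → Matrix (Fin nv) (Fin nu) ℂ)
  (Awu : Fin 3 → Fin 3 → Fin 3 → Matrix (Fin nw) (Fin nu) ℂ)
  (Awv : Fin 3 → Fin 3 → Matrix (Fin nw) (Fin nv) ℂ)
  (Aww : Fin 3 → Matrix (Fin nw) (Fin nw) ℂ)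
  (Bw1u : Fin 3 → Fin 3 → Matrix (Fin nw) (Fin nu) ℂ)

/-- The FT3S principal symbol `P₃(s)`. -/
noncomputable def P3 (s : Fin 3 → ℝ) : Matrix (I3 nu nv nw) (I3 nu nv nw) ℂ :=
  Matrix.of fun r c =>
    match r, c with
    | Sum.inl m, Sum.inl m' => ∑ i, (s i : ℂ) * Auu i m m'
    | Sum.inl m, Sum.inr (Sum.inl q) => Auv m q
    | Sum.inl _, Sum.inr (Sum.inr _) => 0
    | Sum.inr (Sum.inl p), Sum.inl m' => ∑ i, ∑ j, (s i : ℂ) * (s j : ℂ) * Avu i j p m'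
    | Sum.inr (Sum.inl p), Sum.inr (Sum.inl q) => ∑ i, (s i : ℂ) * Avv i p q
    | Sum.inr (Sum.inl p), Sum.inr (Sum.inr t) => Avw p t
    | Sum.inr (Sum.inr t), Sum.inl m' =>
        ∑ i, ∑ j, ∑ k, (s i : ℂ) * (s j : ℂ) * (s k : ℂ) * Awu i j k t m'
    | Sum.inr (Sum.inr t), Sum.inr (Sum.inl q) =>
        ∑ i, ∑ j, (s i : ℂ) * (s j : ℂ) * Awv i j t q
    | Sum.inr (Sum.inr t), Sum.inr (Sum.inr t') => ∑ i, (s i : ℂ) * Aww i t t'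

/-- The principal symbol `P₂(s)` of the FT2S reduction with reduction parameters
`D^u, D̄^u, D, D̄, D^v, D̄^v, D^w, D̄^w`. -/
noncomputable def P2
    (Du : Fin 3 → Matrix (Fin nu) (Fin nu) ℂ)
    (Dbaru : Fin 3 → Fin 3 → Matrix (Fin nu) (Fin nu) ℂ)
    (DD : Fin 3 → Fin 3 → Matrix (Fin nu) (Fin nu) ℂ)
    (Dbar : Fin 3 → Fin 3 → Fin 3 → Matrix (Fin nu) (Fin nu) ℂ)
    (Dv : Fin 3 → Matrix (Fin nv) (Fin nu) ℂ)
    (Dbarv : Fin 3 → Fin 3 → Matrix (Fin nv) (Fin nu) ℂ)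
    (Dw : Fin 3 → Fin 3 → Matrix (Fin nw) (Fin nu) ℂ)
    (Dbarw : Fin 3 → Fin 3 → Fin 3 → Matrix (Fin nw) (Fin nu) ℂ)
    (s : Fin 3 → ℝ) : Matrix (I2 nu nv nw) (I2 nu nv nw) ℂ :=
  Matrix.of fun r c =>
    match r, c with
    | Sum.inl m, Sum.inl m' => ∑ i, (s i : ℂ) * (Auu i + Du i) m m'
    | Sum.inl m, Sum.inr (Sum.inl (b, m')) => ∑ i, (s i : ℂ) * Dbaru i b m m'
    | Sum.inl _, Sum.inr (Sum.inr (Sum.inl _)) => 0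
    | Sum.inl _, Sum.inr (Sum.inr (Sum.inr _)) => 0
    | Sum.inr (Sum.inl (a, m)), Sum.inl m' =>
        ∑ i, (s i : ℂ) * ((if a = i then Bu1u else 0) + DD a i) m m'
    | Sum.inr (Sum.inl (a, m)), Sum.inr (Sum.inl (b, m')) =>
        ∑ i, (s i : ℂ) * ((if a = i then Auu b else 0) + Dbar a i b) m m'
    | Sum.inr (Sum.inl (a, m)), Sum.inr (Sum.inr (Sum.inl q)) => (s a : ℂ) * Auv m q
    | Sum.inr (Sum.inl _), Sum.inr (Sum.inr (Sum.inr _)) => 0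
    | Sum.inr (Sum.inr (Sum.inl p)), Sum.inl m' =>
        ∑ i, (s i : ℂ) * (Bv1u i + Dv i) p m'
    | Sum.inr (Sum.inr (Sum.inl p)), Sum.inr (Sum.inl (b, m')) =>
        ∑ i, (s i : ℂ) * (Avu i b + Dbarv i b) p m'
    | Sum.inr (Sum.inr (Sum.inl p)), Sum.inr (Sum.inr (Sum.inl q)) =>
        ∑ i, (s i : ℂ) * Avv i p q
    | Sum.inr (Sum.inr (Sum.inl p)), Sum.inr (Sum.inr (Sum.inr t)) => Avw p t
    | Sum.inr (Sum.inr (Sum.inr t)), Sum.inl m' =>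
        ∑ i, ∑ j, (s i : ℂ) * (s j : ℂ) * (Bw1u i j + Dw i j) t m'
    | Sum.inr (Sum.inr (Sum.inr t)), Sum.inr (Sum.inl (b, m')) =>
        ∑ i, ∑ j, (s i : ℂ) * (s j : ℂ) * (Awu i j b + Dbarw i j b) t m'
    | Sum.inr (Sum.inr (Sum.inr t)), Sum.inr (Sum.inr (Sum.inl q)) =>
        ∑ i, ∑ j, (s i : ℂ) * (s j : ℂ) * Awv i j t q
    | Sum.inr (Sum.inr (Sum.inr t)), Sum.inr (Sum.inr (Sum.inr t')) =>
        ∑ i, (s i : ℂ) * Aww i t t'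

/-!
Write `R` for the isometry `(u, v, w) ↦ (0, s_a u, v, w)`, `E` for the Hermitian matrix
`d_a ↦ i ε_a^{jb} s_j d_b` and `N` for the rows of the reduced symbol that evolve `(s^a d_a, v, w)`.
The parameters are chosen so that `P2 = R N + λ E` with `N R = P3`: the longitudinal variables
evolve by `P3`, the transverse part of `d_a` by `λ E`, and only the coupling `N E²` of the former to
the latter stands in the way of a block diagonal symbol. A shear `1 + R X` removes it as soon as `X`
solves the Sylvester equation `P3 X - λ X E = N E²`; as the nonzero eigenvalues of `λ E` are `± λ`
and `λ > ‖P3‖`, this is solvable with `‖X‖ ≤ ‖N‖ / (λ - ‖P3‖)`. The decoupled symbol is symmetrized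
by `H3` on the range of `R` and by the identity on its complement; compactness of the sphere makes
the constants uniform, and a symmetrizer `H = Bᴴ B` makes `B P2 B⁻¹` Hermitian, hence diagonalizable
by a unitary.
-/

section SpectralNorm

open scoped MatrixOrder Matrix.Norms.L2Operator

theorem loewnerLE_iff_le {n : Type*} [Fintype n] {A B : Matrix n n ℂ} :
    loewnerLE A B ↔ A ≤ B := Iff.rfl

variable {m n : Type*} [Fintype m] [Fintype n] [DecidableEq n]

theorem matOpNorm_eq_norm (A : Matrix n n ℂ) : matOpNorm A = ‖A‖ := rfl

theorem conjTranspose_mul_self_le_smul_one_iff (A : Matrix m n ℂ) {r : ℝ} (hr : 0 ≤ r) :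
    Aᴴ * A ≤ (r : ℂ) • (1 : Matrix n n ℂ) ↔ ‖A‖ ^ 2 ≤ r := by
  have hnonneg : 0 ≤ Aᴴ * A :=
    Matrix.nonneg_iff_posSemidef.2 (Matrix.posSemidef_conjTranspose_mul_self A)
  have hiff := CStarAlgebra.norm_le_iff_le_algebraMap (Aᴴ * A) hr hnonneg
  rw [Matrix.l2_opNorm_conjTranspose_mul_self, ← sq, Algebra.algebraMap_eq_smul_one,
    ← Complex.coe_smul] at hiff
  exact hiff.symm

theorem one_le_smul_conjTranspose_mul_self {S S' : Matrix n n ℂ} {κ : ℝ} (hS : S' * S = 1)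
    (hκ : ‖S'‖ ≤ κ) : 1 ≤ ((κ ^ 2 : ℝ) : ℂ) • (Sᴴ * S) := by
  have hle := star_left_conjugate_le_conjugate
    ((conjTranspose_mul_self_le_smul_one_iff S' (sq_nonneg κ)).2 (by gcongr)) S
  have hcancel : Sᴴ * (S'ᴴ * S') * S = 1 := by
    rw [← Matrix.mul_assoc, ← conjTranspose_mul, Matrix.mul_assoc, hS, conjTranspose_one,
      Matrix.one_mul]
  simpa [star_eq_conjTranspose, hcancel] using hle

theorem norm_le_one_of_conjTranspose_mul_self_eq_one {R : Matrix m n ℂ} (hR : Rᴴ * R = 1) :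
    ‖R‖ ≤ 1 := by
  have h := (conjTranspose_mul_self_le_smul_one_iff R zero_le_one).1 (by simp [hR])
  exact (sq_le_one_iff₀ (norm_nonneg R)).1 h

theorem posSemidef_one_sub_mul_conjTranspose [DecidableEq m] {R : Matrix m n ℂ}
    (hR : Rᴴ * R = 1) : (1 - R * Rᴴ).PosSemidef := by
  have hsq : (1 - R * Rᴴ)ᴴ * (1 - R * Rᴴ) = 1 - R * Rᴴ := by
    simp only [conjTranspose_sub, conjTranspose_one, conjTranspose_mul,
      conjTranspose_conjTranspose, Matrix.mul_sub, Matrix.sub_mul, Matrix.mul_one, Matrix.one_mul]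
    rw [Matrix.mul_assoc, ← Matrix.mul_assoc Rᴴ, hR, Matrix.one_mul, sub_self, sub_zero]
  exact hsq ▸ Matrix.posSemidef_conjTranspose_mul_self _

theorem norm_le_one_of_isHermitian_of_pow_three_eq {E : Matrix n n ℂ} (hE : E.IsHermitian)
    (hE3 : E * E * E = E) : ‖E‖ ≤ 1 := by
  have hsq : ∀ A : Matrix n n ℂ, A.IsHermitian → ‖A * A‖ = ‖A‖ * ‖A‖ := fun A hA => by
    simpa only [hA.eq] using Matrix.l2_opNorm_conjTranspose_mul_self A
  by_contra! h
  have hEE : (E * E) * (E * E) = E * E := by rw [← Matrix.mul_assoc, hE3]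
  have h4 := hsq (E * E) (by simp [Matrix.IsHermitian, hE.eq])
  rw [hEE, hsq E hE] at h4
  nlinarith [one_lt_mul_of_lt_of_le h h.le]

end SpectralNorm

section Symmetrizer

open scoped MatrixOrder Matrix.Norms.L2Operator

variable {m n : Type*} [Fintype m] [Fintype n] [DecidableEq n]

/-- `H` is a symmetrizer of the symbol `P`, with constant `M`: a Hermitian matrix
`M⁻¹ ≤ H ≤ M` for which `P` is self-adjoint with respect to the inner product `x ↦ xᴴ H x`.
A first order symbol is strongly hyperbolic when every `P s` has a symmetrizer whose constant does
not depend on the unit vector `s`. -/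
structure IsSymmetrizer (M : ℝ) (H P : Matrix n n ℂ) : Prop where
  pos : 0 < M
  isHermitian : H.IsHermitian
  mul_eq : H * P = Pᴴ * H
  inv_smul_one_le : ((M⁻¹ : ℝ) : ℂ) • 1 ≤ H
  le_smul_one : H ≤ (M : ℂ) • 1

namespace IsSymmetrizer

variable {M : ℝ} {H P : Matrix n n ℂ}

theorem mono (h : IsSymmetrizer M H P) {M' : ℝ} (hM : M ≤ M') : IsSymmetrizer M' H P where
  pos := h.pos.trans_le hM
  isHermitian := h.isHermitian
  mul_eq := h.mul_eq
  inv_smul_one_le := by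
    refine le_trans ?_ h.inv_smul_one_le
    gcongr
    exact_mod_cast inv_anti₀ h.pos hM
  le_smul_one := by
    refine h.le_smul_one.trans ?_
    gcongr
    exact_mod_cast hM

theorem posDef (h : IsSymmetrizer M H P) : H.PosDef := by
  have hpos : (((M⁻¹ : ℝ) : ℂ) • (1 : Matrix n n ℂ)).PosDef :=
    Matrix.PosDef.one.smul (by exact_mod_cast inv_pos.2 h.pos)
  simpa using hpos.add_posSemidef (Matrix.le_iff.1 h.inv_smul_one_le)

theorem conj (h : IsSymmetrizer M H P) {Q S S' : Matrix n n ℂ} {κ : ℝ} (hκ : 0 < κ)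
    (hS : S' * S = 1) (hSQ : S * Q = P * S) (hSκ : ‖S‖ ≤ κ) (hS'κ : ‖S'‖ ≤ κ) :
    IsSymmetrizer (M * κ ^ 2) (Sᴴ * H * S) Q where
  pos := mul_pos h.pos (pow_pos hκ 2)
  isHermitian := Matrix.isHermitian_conjTranspose_mul_mul S h.isHermitian
  mul_eq := by
    have hQS : Qᴴ * Sᴴ = Sᴴ * Pᴴ := by rw [← conjTranspose_mul, hSQ, conjTranspose_mul]
    calc Sᴴ * H * S * Q = Sᴴ * (H * P) * S := by
          rw [Matrix.mul_assoc _ S Q, hSQ]; simp only [Matrix.mul_assoc]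
      _ = Sᴴ * Pᴴ * H * S := by rw [h.mul_eq]; simp only [Matrix.mul_assoc]
      _ = Qᴴ * (Sᴴ * H * S) := by rw [← hQS]; simp only [Matrix.mul_assoc]
  inv_smul_one_le := by
    have hone := one_le_smul_conjTranspose_mul_self hS hS'κ
    calc (((M * κ ^ 2)⁻¹ : ℝ) : ℂ) • (1 : Matrix n n ℂ)
        ≤ (((M * κ ^ 2)⁻¹ : ℝ) : ℂ) • ((κ ^ 2 : ℝ) : ℂ) • (Sᴴ * S) := by
          have := h.pos
          gcongr
      _ = Sᴴ * (((M⁻¹ : ℝ) : ℂ) • 1) * S := by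
          rw [smul_smul, ← Complex.ofReal_mul, mul_inv, mul_assoc, inv_mul_cancel₀ (by positivity),
            mul_one, Matrix.mul_smul, Matrix.smul_mul, Matrix.mul_one]
      _ ≤ Sᴴ * H * S := star_left_conjugate_le_conjugate h.inv_smul_one_le S
  le_smul_one := by
    calc Sᴴ * H * S ≤ Sᴴ * ((M : ℂ) • 1) * S := star_left_conjugate_le_conjugate h.le_smul_one S
      _ = (M : ℂ) • (Sᴴ * S) := by rw [Matrix.mul_smul, Matrix.smul_mul, Matrix.mul_one]
      _ ≤ (M : ℂ) • ((κ ^ 2 : ℝ) : ℂ) • 1 := by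
          gcongr
          · exact_mod_cast h.pos.le
          · exact (conjTranspose_mul_self_le_smul_one_iff S (sq_nonneg κ)).2 (by gcongr)
      _ = ((M * κ ^ 2 : ℝ) : ℂ) • 1 := by rw [smul_smul, ← Complex.ofReal_mul]

theorem extend [DecidableEq m] (h : IsSymmetrizer M H P) (hM : 1 ≤ M) {R : Matrix m n ℂ}
    (hR : Rᴴ * R = 1) {E : Matrix m m ℂ} (hE : E.IsHermitian) (hER : E * R = 0) :
    IsSymmetrizer M (R * H * Rᴴ + (1 - R * Rᴴ)) (R * P * Rᴴ + E) := by
  have hRE : Rᴴ * E = 0 := by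
    simpa [hE.eq] using congrArg conjTranspose hER
  have hproj := posSemidef_one_sub_mul_conjTranspose hR
  have hmul : (R * H * Rᴴ + (1 - R * Rᴴ)) * (R * P * Rᴴ + E) = R * (H * P) * Rᴴ + E := by
    have hRR : ∀ X : Matrix n m ℂ, Rᴴ * (R * X) = X := fun X => by
      rw [← Matrix.mul_assoc, hR, Matrix.one_mul]
    simp only [Matrix.add_mul, Matrix.sub_mul, Matrix.mul_add, Matrix.mul_assoc, Matrix.one_mul,
      hRR, hRE, Matrix.mul_zero]
    abel
  have hHerm : (R * H * Rᴴ + (1 - R * Rᴴ)).IsHermitian :=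
    (Matrix.isHermitian_mul_mul_conjTranspose R h.isHermitian).add hproj.isHermitian
  refine ⟨h.pos, hHerm, ?_, ?_, ?_⟩
  · have hHP : (H * P)ᴴ = H * P := by
      rw [conjTranspose_mul, h.isHermitian.eq, h.mul_eq]
    have hsymm : (R * (H * P) * Rᴴ + E).IsHermitian :=
      (Matrix.isHermitian_mul_mul_conjTranspose R hHP).add hE
    rw [← hHerm.eq, ← conjTranspose_mul, hHerm.eq, hmul, hsymm.eq]
  · have hc : (0 : ℂ) ≤ ((1 - M⁻¹ : ℝ) : ℂ) := by
      exact_mod_cast sub_nonneg.2 (inv_le_one_of_one_le₀ hM)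
    rw [Matrix.le_iff]
    convert ((Matrix.le_iff.1 h.inv_smul_one_le).mul_mul_conjTranspose_same R).add
      (hproj.smul hc) using 1
    simp only [Matrix.mul_sub, Matrix.sub_mul, Matrix.mul_smul, Matrix.smul_mul, Matrix.mul_one]
    push_cast
    module
  · have hc : (0 : ℂ) ≤ ((M - 1 : ℝ) : ℂ) := by exact_mod_cast sub_nonneg.2 hM
    rw [Matrix.le_iff]
    convert ((Matrix.le_iff.1 h.le_smul_one).mul_mul_conjTranspose_same R).add
      (hproj.smul hc) using 1
    simp only [Matrix.mul_sub, Matrix.sub_mul, Matrix.mul_smul, Matrix.smul_mul, Matrix.mul_one]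
    push_cast
    module

/-- The similarity `B` is a factor of `H = Bᴴ B`. -/
theorem exists_isHermitian_conj (h : IsSymmetrizer M H P) :
    ∃ B B' : Matrix n n ℂ, B * B' = 1 ∧ ‖B‖ ≤ √M ∧ ‖B'‖ ≤ √M ∧ (B * P * B').IsHermitian := by
  obtain ⟨B, hB⟩ := CStarAlgebra.nonneg_iff_eq_star_mul_self.1
    (Matrix.nonneg_iff_posSemidef.2 h.posDef.posSemidef)
  rw [Matrix.star_eq_conjTranspose] at hB
  have hdet : IsUnit B.det := by
    have hH := (Matrix.isUnit_iff_isUnit_det H).1 h.posDef.isUnit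
    rw [hB, Matrix.det_mul] at hH
    exact isUnit_of_mul_isUnit_right hH
  have hBB' : B * B⁻¹ = 1 := Matrix.mul_nonsing_inv B hdet
  have hB'B : (B⁻¹)ᴴ * Bᴴ = 1 := by rw [← conjTranspose_mul, hBB', conjTranspose_one]
  refine ⟨B, B⁻¹, hBB', ?_, ?_, ?_⟩
  · refine Real.le_sqrt_of_sq_le ((conjTranspose_mul_self_le_smul_one_iff B h.pos.le).1 ?_)
    exact hB ▸ h.le_smul_one
  · refine Real.le_sqrt_of_sq_le ((conjTranspose_mul_self_le_smul_one_iff _ h.pos.le).1 ?_)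
    have hle := star_left_conjugate_le_conjugate h.inv_smul_one_le B⁻¹
    have hcancel : (B⁻¹)ᴴ * H * B⁻¹ = 1 := by
      rw [hB, ← Matrix.mul_assoc, hB'B, Matrix.one_mul, hBB']
    have hM : (0 : ℂ) ≤ M := by exact_mod_cast h.pos.le
    have hM0 : (M : ℂ) ≠ 0 := by exact_mod_cast h.pos.ne'
    have := smul_le_smul_of_nonneg_left hle hM
    simpa [star_eq_conjTranspose, hcancel, smul_smul, hM0] using this
  · have hconj : B * P * B⁻¹ = (B⁻¹)ᴴ * (H * P) * B⁻¹ := by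
      calc B * P * B⁻¹ = (B⁻¹)ᴴ * Bᴴ * B * P * B⁻¹ := by rw [hB'B, Matrix.one_mul]
        _ = (B⁻¹)ᴴ * (H * P) * B⁻¹ := by rw [hB]; simp only [Matrix.mul_assoc]
    have hHP : (H * P)ᴴ = H * P := by rw [conjTranspose_mul, h.isHermitian.eq, h.mul_eq]
    exact hconj ▸ Matrix.isHermitian_conjTranspose_mul_mul _ hHP

theorem exists_diagonalization (h : IsSymmetrizer M H P) :
    ∃ T T' : Matrix n n ℂ, T * T' = 1 ∧ T' * T = 1 ∧ ‖T‖ ≤ √M ∧ ‖T'‖ ≤ √M ∧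
      ∃ Λ : n → ℝ, T' * P * T = Matrix.diagonal fun i => (Λ i : ℂ) := by
  obtain ⟨B, B', hBB', hB, hB', hherm⟩ := h.exists_isHermitian_conj
  have hspec := hherm.spectral_theorem
  rw [Unitary.conjStarAlgAut_apply, Matrix.star_eq_conjTranspose] at hspec
  have hUU : (hherm.eigenvectorUnitary : Matrix n n ℂ)ᴴ * hherm.eigenvectorUnitary = 1 :=
    Unitary.coe_star_mul_self hherm.eigenvectorUnitary
  generalize (hherm.eigenvectorUnitary : Matrix n n ℂ) = U at hspec hUU
  have hU : ‖U‖ ≤ 1 := norm_le_one_of_conjTranspose_mul_self_eq_one hUU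
  have hinv : Uᴴ * B * (B' * U) = 1 := by
    rw [Matrix.mul_assoc, ← Matrix.mul_assoc B, hBB', Matrix.one_mul, hUU]
  refine ⟨B' * U, Uᴴ * B, mul_eq_one_comm.1 hinv, hinv, ?_, ?_, hherm.eigenvalues, ?_⟩
  · exact (norm_mul_le_of_le hB' hU).trans_eq (mul_one _)
  · rw [← Matrix.l2_opNorm_conjTranspose] at hU
    exact (norm_mul_le_of_le hU hB).trans_eq (one_mul _)
  · calc Uᴴ * B * P * (B' * U) = Uᴴ * (B * P * B') * U := by simp only [Matrix.mul_assoc]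
      _ = (Uᴴ * U) * Matrix.diagonal (RCLike.ofReal ∘ hherm.eigenvalues) * (Uᴴ * U) := by
          conv_lhs => rw [hspec]
          simp only [Matrix.mul_assoc]
      _ = Matrix.diagonal fun i => (hherm.eigenvalues i : ℂ) := by
          rw [hUU, Matrix.one_mul, Matrix.mul_one]; rfl

end IsSymmetrizer

end Symmetrizer

section Decoupling

open scoped Matrix.Norms.L2Operator

variable {m n : Type*} [Fintype m] [Fintype n] [DecidableEq m] [DecidableEq n]

theorem mul_norm_le_of_smul_sub_mul_mul_eq {A : Matrix n n ℂ} {E : Matrix m m ℂ} (hE : ‖E‖ ≤ 1)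
    {z : ℂ} {X G : Matrix n m ℂ} (hX : z • X - A * X * E = G) : (‖z‖ - ‖A‖) * ‖X‖ ≤ ‖G‖ := by
  have hAXE : ‖A * X * E‖ ≤ ‖A‖ * ‖X‖ :=
    calc ‖A * X * E‖ ≤ ‖A * X‖ * ‖E‖ := Matrix.l2_opNorm_mul _ _
      _ ≤ ‖A‖ * ‖X‖ * 1 := by gcongr; exact Matrix.l2_opNorm_mul _ _
      _ = ‖A‖ * ‖X‖ := mul_one _
  have hsub := norm_sub_norm_le (z • X) (A * X * E)
  rw [hX, norm_smul] at hsub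
  linarith

theorem exists_smul_sub_mul_mul_eq {A : Matrix n n ℂ} {E : Matrix m m ℂ} (hE : ‖E‖ ≤ 1) {z : ℂ}
    (hz : ‖A‖ < ‖z‖) (G : Matrix n m ℂ) : ∃ X : Matrix n m ℂ, z • X - A * X * E = G := by
  let Φ : Matrix n m ℂ →ₗ[ℂ] Matrix n m ℂ :=
    { toFun := fun X => z • X - A * X * E
      map_add' := fun X Y => by simp only [smul_add, Matrix.mul_add, Matrix.add_mul]; abel
      map_smul' := fun c X => by
        simp only [Matrix.mul_smul, Matrix.smul_mul, RingHom.id_apply, smul_sub, smul_comm z c] }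
  have hinj : Function.Injective Φ := by
    refine (injective_iff_map_eq_zero Φ).2 fun X hX => ?_
    have hle := mul_norm_le_of_smul_sub_mul_mul_eq hE hX
    rw [norm_zero] at hle
    exact norm_le_zero_iff.1 (nonpos_of_mul_nonpos_right hle (sub_pos.2 hz))
  exact LinearMap.injective_iff_surjective.1 hinj G

/-- Multiplying by `E` on the right turns the Sylvester equation `A X - z X E = N E²` into
`z X - A X E = -N E`, which is solvable because `X ↦ A X E` is a strict contraction relative
to `z`. -/
theorem exists_sylvester_solution {A : Matrix n n ℂ} {E : Matrix m m ℂ} (hE : ‖E‖ ≤ 1)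
    (hE3 : E * E * E = E) {z : ℂ} (hz : ‖A‖ < ‖z‖) (N : Matrix n m ℂ) :
    ∃ X : Matrix n m ℂ, A * X - z • (X * E) = N * E * E ∧ X * (E * E) = X ∧
      (‖z‖ - ‖A‖) * ‖X‖ ≤ ‖N‖ := by
  obtain ⟨Y, hY⟩ := exists_smul_sub_mul_mul_eq hE hz (-(N * E))
  have hXE : Y * (E * E) * E = Y * E := by rw [Matrix.mul_assoc, hE3]
  have hX : z • (Y * (E * E)) - A * (Y * (E * E)) * E = -(N * E) := by
    have h := congrArg (· * (E * E)) hY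
    simp only [Matrix.sub_mul, Matrix.neg_mul, Matrix.smul_mul, Matrix.mul_assoc] at h
    rw [← Matrix.mul_assoc E E E, hE3] at h
    rwa [Matrix.mul_assoc A, hXE]
  refine ⟨Y * (E * E), ?_, ?_, ?_⟩
  · have h := congrArg (· * E) hX
    simp only [Matrix.sub_mul, Matrix.neg_mul, Matrix.smul_mul] at h
    rw [Matrix.mul_assoc A, hXE, Matrix.mul_assoc A, Matrix.mul_assoc Y] at h
    rw [hXE, ← neg_sub, h, neg_neg]
  · rw [← Matrix.mul_assoc, hXE, Matrix.mul_assoc]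
  · refine (mul_norm_le_of_smul_sub_mul_mul_eq hE hX).trans ?_
    rw [norm_neg]
    calc ‖N * E‖ ≤ ‖N‖ * ‖E‖ := Matrix.l2_opNorm_mul _ _
      _ ≤ ‖N‖ * 1 := by gcongr
      _ = ‖N‖ := mul_one _

theorem shear_mul_eq {R : Matrix m n ℂ} {N X : Matrix n m ℂ} {E : Matrix m m ℂ} {z : ℂ}
    (hR : Rᴴ * R = 1) (hN : N * (R * Rᴴ + E * E) = N) (hER : E * R = 0) (hXR : X * R = 0)
    (hX : N * R * X - z • (X * E) = N * E * E) :
    (1 + R * X) * (R * N + z • E) = (R * (N * R) * Rᴴ + z • E) * (1 + R * X) := by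
  have hN' : N = N * R * Rᴴ + (N * R * X - z • (X * E)) := by
    rw [hX]; simpa only [Matrix.mul_add, Matrix.mul_assoc] using hN.symm
  calc (1 + R * X) * (R * N + z • E)
      = R * N + z • E + R * (X * R) * N + z • (R * (X * E)) := by
        simp only [Matrix.add_mul, Matrix.mul_add, Matrix.one_mul, Matrix.mul_smul,
          Matrix.mul_assoc, smul_add]
        abel
    _ = R * (N * R * Rᴴ + (N * R * X - z • (X * E))) + z • E + z • (R * (X * E)) := by
        rw [← hN', hXR]; simp
    _ = R * (N * R) * Rᴴ + R * (N * R) * (Rᴴ * R) * X + z • E + z • (E * R * X) := by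
        rw [hR, hER]
        simp only [Matrix.mul_add, Matrix.mul_sub, Matrix.mul_smul, Matrix.mul_assoc,
          Matrix.one_mul, Matrix.zero_mul, smul_zero]
        abel
    _ = (R * (N * R) * Rᴴ + z • E) * (1 + R * X) := by
        simp only [Matrix.add_mul, Matrix.mul_add, Matrix.mul_one, Matrix.smul_mul,
          Matrix.mul_assoc]
        abel

theorem IsSymmetrizer.exists_of_compression {M p C lam : ℝ} {H : Matrix n n ℂ} {R : Matrix m n ℂ}
    {N : Matrix n m ℂ} {E : Matrix m m ℂ} (h : IsSymmetrizer M H (N * R)) (hR : Rᴴ * R = 1)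
    (hE : E.IsHermitian) (hE3 : E * E * E = E) (hER : E * R = 0)
    (hN : N * (R * Rᴴ + E * E) = N) (hp : ‖N * R‖ ≤ p) (hlam : p < lam) (hC : ‖N‖ ≤ C) :
    ∃ H' : Matrix m m ℂ,
      IsSymmetrizer (max M 1 * (1 + C / (lam - p)) ^ 2) H' (R * N + (lam : ℂ) • E) := by
  have hE1 := norm_le_one_of_isHermitian_of_pow_three_eq hE hE3
  have hnorm : ‖(lam : ℂ)‖ = lam := by
    rw [Complex.norm_real, Real.norm_of_nonneg ((norm_nonneg _).trans (hp.trans hlam.le))]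
  obtain ⟨X, hSyl, hXE, hXnorm⟩ :=
    exists_sylvester_solution hE1 hE3 (hnorm.symm ▸ hp.trans_lt hlam) N
  have hXR : X * R = 0 := by
    rw [← hXE, Matrix.mul_assoc, Matrix.mul_assoc, hER, Matrix.mul_zero, Matrix.mul_zero]
  have hRX : ‖R * X‖ ≤ C / (lam - p) := by
    rw [hnorm] at hXnorm
    have hX : ‖X‖ ≤ C / (lam - p) := by
      rw [le_div_iff₀' (sub_pos.2 hlam)]
      calc (lam - p) * ‖X‖ ≤ (lam - ‖N * R‖) * ‖X‖ := by gcongr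
        _ ≤ C := hXnorm.trans hC
    calc ‖R * X‖ ≤ ‖R‖ * ‖X‖ := Matrix.l2_opNorm_mul _ _
      _ ≤ 1 * (C / (lam - p)) := by
          gcongr; exact norm_le_one_of_conjTranspose_mul_self_eq_one hR
      _ = C / (lam - p) := one_mul _
  have hsq : R * X * (R * X) = 0 := by
    rw [Matrix.mul_assoc, ← Matrix.mul_assoc X, hXR, Matrix.zero_mul, Matrix.mul_zero]
  have hinv : (1 - R * X) * (1 + R * X) = 1 := by
    rw [Matrix.sub_mul, Matrix.one_mul, Matrix.mul_add, Matrix.mul_one, hsq]; abel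
  have hone : ‖(1 : Matrix m m ℂ)‖ ≤ 1 :=
    norm_le_one_of_conjTranspose_mul_self_eq_one (by simp)
  have hlamE : ((lam : ℂ) • E).IsHermitian := hE.smul (Complex.conj_ofReal lam)
  have hblock := (h.mono (le_max_left M 1)).extend (le_max_right M 1) hR hlamE
    (by rw [Matrix.smul_mul, hER, smul_zero])
  exact ⟨_, hblock.conj (by linarith [norm_nonneg (R * X)]) hinv
    (shear_mul_eq hR hN hER hXR hSyl)
    ((norm_add_le _ _).trans (add_le_add hone hRX)) ((norm_sub_le _ _).trans (add_le_add hone hRX))⟩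

end Decoupling

section KroneckerColumn

open scoped Kronecker

/-- The matrix `v ⊗ 1` of `x ↦ v ⊗ x`, i.e. `(v ⊗ x)_{a i} = v_a x_i`. -/
def kroneckerCol {l : Type*} (n : Type*) [DecidableEq n] (v : l → ℂ) : Matrix (l × n) n ℂ :=
  Matrix.of fun p j => v p.1 * (1 : Matrix n n ℂ) p.2 j

variable {k l n : Type*} [Fintype n] [DecidableEq n]

theorem kroneckerCol_mul_apply (v : l → ℂ) (A : Matrix n k ℂ) (p : l × n) (c : k) :
    (kroneckerCol n v * A) p c = v p.1 * A p.2 c := by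
  simp [kroneckerCol, Matrix.mul_apply, Matrix.one_apply]

theorem kroneckerCol_mul_conjTranspose_self (v : l → ℂ) :
    kroneckerCol n v * (kroneckerCol n v)ᴴ = vecMulVec v (star v) ⊗ₖ (1 : Matrix n n ℂ) := by
  ext p q
  rw [kroneckerCol_mul_apply]
  obtain ⟨a, i⟩ := p
  obtain ⟨b, j⟩ := q
  obtain rfl | hij := eq_or_ne i j
  · simp [kroneckerCol, vecMulVec_apply]
  · simp [kroneckerCol, hij, hij.symm]

variable [Fintype l]

theorem mul_kroneckerCol_apply (v : l → ℂ) (A : Matrix k (l × n) ℂ) (r : k) (j : n) :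
    (A * kroneckerCol n v) r j = ∑ a, A r (a, j) * v a := by
  simp [kroneckerCol, Matrix.mul_apply, Matrix.one_apply, Fintype.sum_prod_type]

theorem kronecker_one_mul_kroneckerCol (A : Matrix l l ℂ) (v : l → ℂ) :
    (A ⊗ₖ (1 : Matrix n n ℂ)) * kroneckerCol n v = kroneckerCol n (A *ᵥ v) := by
  ext p j
  rw [mul_kroneckerCol_apply]
  simp only [kroneckerCol, Matrix.kroneckerMap_apply, Matrix.of_apply, Matrix.mulVec, dotProduct,
    Finset.sum_mul, mul_right_comm]

theorem conjTranspose_kroneckerCol_mul_self (v : l → ℂ) :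
    (kroneckerCol n v)ᴴ * kroneckerCol n v = (star v ⬝ᵥ v) • 1 := by
  ext i j
  rw [mul_kroneckerCol_apply]
  obtain rfl | hij := eq_or_ne i j
  · simp [kroneckerCol, dotProduct]
  · simp [kroneckerCol, hij, hij.symm]

end KroneckerColumn

section CrossMatrix

/-- The matrix `i ε_a^{jb} s_j` of `x ↦ i (s × x)`: it annihilates `s` and squares to the
projection onto the plane orthogonal to a unit vector `s`. -/
noncomputable def crossMatrix (s : Fin 3 → ℝ) : Matrix (Fin 3) (Fin 3) ℂ :=
  Matrix.of fun a b => ∑ j, Complex.I * (s j : ℂ) * (lev a j b : ℂ)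

theorem crossMatrix_eq (s : Fin 3 → ℝ) :
    crossMatrix s = Complex.I • !![0, -(s 2 : ℂ), s 1; s 2, 0, -s 0; -s 1, s 0, 0] := by
  ext a b
  fin_cases a <;> fin_cases b <;> simp [crossMatrix, lev, Fin.sum_univ_three]

theorem isHermitian_crossMatrix (s : Fin 3 → ℝ) : (crossMatrix s).IsHermitian := by
  rw [crossMatrix_eq]
  ext a b
  fin_cases a <;> fin_cases b <;> simp

theorem crossMatrix_mulVec_self (s : Fin 3 → ℝ) : (crossMatrix s *ᵥ fun a => (s a : ℂ)) = 0 := by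
  rw [crossMatrix_eq]
  ext a
  fin_cases a <;> simp [Matrix.mulVec, dotProduct, Fin.sum_univ_three] <;> ring

theorem star_ofReal_dotProduct_self {ι : Type*} [Fintype ι] {s : ι → ℝ} (hs : ∑ i, s i ^ 2 = 1) :
    (star fun a => (s a : ℂ)) ⬝ᵥ (fun a => (s a : ℂ)) = 1 := by
  simp only [dotProduct, Pi.star_apply, RCLike.star_def, Complex.conj_ofReal, ← sq]
  exact_mod_cast hs

theorem crossMatrix_mul_self {s : Fin 3 → ℝ} (hs : ∑ i, s i ^ 2 = 1) :
    crossMatrix s * crossMatrix s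
      = 1 - vecMulVec (fun a => (s a : ℂ)) (star fun a => (s a : ℂ)) := by
  have hone : (1 : Matrix (Fin 3) (Fin 3) ℂ) = ((s 0 : ℂ) ^ 2 + s 1 ^ 2 + s 2 ^ 2) • 1 := by
    have hs' : (s 0 : ℂ) ^ 2 + s 1 ^ 2 + s 2 ^ 2 = 1 := by
      exact_mod_cast Fin.sum_univ_three (fun i => s i ^ 2) ▸ hs
    rw [hs', one_smul]
  rw [crossMatrix_eq, smul_mul_smul_comm, Complex.I_mul_I, hone]
  ext a b
  fin_cases a <;> fin_cases b <;> simp [vecMulVec_apply] <;> ring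

theorem crossMatrix_pow_three {s : Fin 3 → ℝ} (hs : ∑ i, s i ^ 2 = 1) :
    crossMatrix s * crossMatrix s * crossMatrix s = crossMatrix s := by
  rw [Matrix.mul_assoc, crossMatrix_mul_self hs, Matrix.mul_sub, Matrix.mul_one,
    Matrix.mul_vecMulVec, crossMatrix_mulVec_self, Matrix.zero_vecMulVec, sub_zero]

end CrossMatrix

section Symbols

open scoped Kronecker

/-- The map `(u, v, w) ↦ (0, s_a u, v, w)`, an isometry for unit `s`; its range is the longitudinal
part of the reduction variables. -/
def longitudinalEmbedding (nu nv nw : ℕ) (s : Fin 3 → ℝ) :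
    Matrix (I2 nu nv nw) (I3 nu nv nw) ℂ :=
  fromRows 0 (fromBlocks (kroneckerCol (Fin nu) fun a => (s a : ℂ)) 0 0 1)

/-- The Hermitian matrix `d_a ↦ i ε_a^{jb} s_j d_b` on the reduction variables. -/
noncomputable def transverseRotation (nu nv nw : ℕ) (s : Fin 3 → ℝ) :
    Matrix (I2 nu nv nw) (I2 nu nv nw) ℂ :=
  fromBlocks 0 0 0 (fromBlocks (crossMatrix s ⊗ₖ 1) 0 0 0)

/-- The columns of the longitudinal symbol paired with `d_c`: the symbol `P3` with the factor
`s_c` of the innermost derivative `∂_c u` stripped off. -/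
noncomputable def longitudinalDerivativeSymbol (s : Fin 3 → ℝ) :
    Matrix (I3 nu nv nw) (Fin 3 × Fin nu) ℂ :=
  Matrix.of fun r c =>
    match r with
    | Sum.inl m => Auu c.1 m c.2
    | Sum.inr (Sum.inl p) => ∑ i, (s i : ℂ) * Avu i c.1 p c.2
    | Sum.inr (Sum.inr t) => ∑ i, ∑ j, (s i : ℂ) * (s j : ℂ) * Awu i j c.1 t c.2

/-- The rows of the reduced symbol giving the evolution of `(s^a d_a, v, w)`, as a function of the
unknowns `(u, d_a, v, w)`. -/
noncomputable def longitudinalSymbol (s : Fin 3 → ℝ) : Matrix (I3 nu nv nw) (I2 nu nv nw) ℂ :=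
  fromCols 0 (fromCols (longitudinalDerivativeSymbol Auu Avu Awu s)
    ((P3 Auu Auv Avu Avv Avw Awu Awv Aww s).submatrix id Sum.inr))

/-- The symbol `P2` for the reduction parameters that cancel all lower order terms, with
`D̄_a^{jb} = i λ ε_a^{jb}`. -/
noncomputable def reducedSymbol (lam : ℝ) (s : Fin 3 → ℝ) :
    Matrix (I2 nu nv nw) (I2 nu nv nw) ℂ :=
  P2 Auu Auv Bu1u Avu Avv Avw Bv1u Awu Awv Aww Bw1u
    (fun j => -Auu j) (fun _ _ => 0) (fun a j => if a = j then -Bu1u else 0)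
    (fun a j b => (Complex.I * (lam : ℂ) * (lev a j b : ℂ)) • (1 : Matrix (Fin nu) (Fin nu) ℂ))
    (fun j => -Bv1u j) (fun _ _ => 0) (fun p j => -Bw1u p j) (fun _ _ _ => 0) s

theorem conjTranspose_longitudinalEmbedding_mul_self {s : Fin 3 → ℝ} (hs : ∑ i, s i ^ 2 = 1) :
    (longitudinalEmbedding nu nv nw s)ᴴ * longitudinalEmbedding nu nv nw s = 1 := by
  simp only [longitudinalEmbedding, conjTranspose_fromRows_eq_fromCols_conjTranspose,
    fromCols_mul_fromRows, fromBlocks_conjTranspose, fromBlocks_multiply,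
    conjTranspose_kroneckerCol_mul_self, star_ofReal_dotProduct_self hs, conjTranspose_zero,
    conjTranspose_one, Matrix.mul_zero, Matrix.zero_mul, Matrix.mul_one, add_zero, zero_add,
    one_smul, fromBlocks_one]

theorem isHermitian_transverseRotation (s : Fin 3 → ℝ) :
    (transverseRotation nu nv nw s).IsHermitian := by
  simp only [Matrix.IsHermitian, transverseRotation, fromBlocks_conjTranspose,
    conjTranspose_kronecker, (isHermitian_crossMatrix s).eq, conjTranspose_zero,
    conjTranspose_one]

theorem transverseRotation_mul_self (s : Fin 3 → ℝ) :
    transverseRotation nu nv nw s * transverseRotation nu nv nw s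
      = fromBlocks 0 0 0 (fromBlocks ((crossMatrix s * crossMatrix s) ⊗ₖ 1) 0 0 0) := by
  simp only [transverseRotation, fromBlocks_multiply, ← mul_kronecker_mul, Matrix.mul_zero,
    Matrix.zero_mul, Matrix.mul_one, add_zero, zero_add]

theorem transverseRotation_pow_three {s : Fin 3 → ℝ} (hs : ∑ i, s i ^ 2 = 1) :
    transverseRotation nu nv nw s * transverseRotation nu nv nw s *
        transverseRotation nu nv nw s = transverseRotation nu nv nw s := by
  rw [transverseRotation_mul_self]
  simp only [transverseRotation, fromBlocks_multiply, ← mul_kronecker_mul, Matrix.mul_zero,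
    Matrix.zero_mul, Matrix.mul_one, add_zero, zero_add, crossMatrix_pow_three hs]

theorem transverseRotation_mul_longitudinalEmbedding (s : Fin 3 → ℝ) :
    transverseRotation nu nv nw s * longitudinalEmbedding nu nv nw s = 0 := by
  have hcross : (crossMatrix s ⊗ₖ (1 : Matrix (Fin nu) (Fin nu) ℂ))
      * kroneckerCol (Fin nu) (fun a => (s a : ℂ)) = 0 := by
    rw [kronecker_one_mul_kroneckerCol, crossMatrix_mulVec_self]
    ext
    simp [kroneckerCol]
  simp only [transverseRotation, longitudinalEmbedding, fromBlocks_mul_fromRows,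
    fromBlocks_multiply, hcross, Matrix.mul_zero, Matrix.zero_mul, add_zero, fromBlocks_zero,
    fromRows_zero]

theorem longitudinal_projection_add_transverse_projection {s : Fin 3 → ℝ}
    (hs : ∑ i, s i ^ 2 = 1) :
    longitudinalEmbedding nu nv nw s * (longitudinalEmbedding nu nv nw s)ᴴ
        + transverseRotation nu nv nw s * transverseRotation nu nv nw s
      = fromBlocks 0 0 0 1 := by
  rw [transverseRotation_mul_self, crossMatrix_mul_self hs]
  simp only [longitudinalEmbedding, conjTranspose_fromRows_eq_fromCols_conjTranspose,
    fromRows_mul_fromCols, fromBlocks_conjTranspose, fromBlocks_multiply, fromBlocks_add,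
    kroneckerCol_mul_conjTranspose_self, ← add_kronecker, add_sub_cancel, one_kronecker_one,
    conjTranspose_zero, conjTranspose_one, Matrix.mul_zero, Matrix.zero_mul, Matrix.mul_one,
    add_zero, zero_add, fromBlocks_one]

theorem longitudinalSymbol_mul_projection {s : Fin 3 → ℝ} (hs : ∑ i, s i ^ 2 = 1) :
    longitudinalSymbol Auu Auv Avu Avv Avw Awu Awv Aww s
        * (longitudinalEmbedding nu nv nw s * (longitudinalEmbedding nu nv nw s)ᴴ
          + transverseRotation nu nv nw s * transverseRotation nu nv nw s)
      = longitudinalSymbol Auu Auv Avu Avv Avw Awu Awv Aww s := by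
  rw [longitudinal_projection_add_transverse_projection hs, longitudinalSymbol,
    fromCols_mul_fromBlocks]
  simp only [Matrix.mul_zero, Matrix.mul_one, add_zero, zero_add]

theorem longitudinalDerivativeSymbol_mul_kroneckerCol (s : Fin 3 → ℝ) :
    longitudinalDerivativeSymbol Auu Avu Awu s * kroneckerCol (Fin nu) (fun a => (s a : ℂ))
      = (P3 Auu Auv Avu Avv Avw Awu Awv Aww s).submatrix id Sum.inl := by
  ext r m
  rw [mul_kroneckerCol_apply]
  rcases r with m' | p | t <;>
    simp only [longitudinalDerivativeSymbol, P3, Matrix.of_apply, Matrix.submatrix_apply, id,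
      Fin.sum_univ_three] <;>
    ring

theorem longitudinalSymbol_mul_longitudinalEmbedding (s : Fin 3 → ℝ) :
    longitudinalSymbol Auu Auv Avu Avv Avw Awu Awv Aww s * longitudinalEmbedding nu nv nw s
      = P3 Auu Auv Avu Avv Avw Awu Awv Aww s := by
  rw [longitudinalSymbol, longitudinalEmbedding, fromCols_mul_fromRows, fromCols_mul_fromBlocks,
    longitudinalDerivativeSymbol_mul_kroneckerCol Auu Auv Avu Avv Avw Awu Awv Aww]
  ext r (m | y) <;> simp

theorem longitudinalEmbedding_mul {k : Type*} (s : Fin 3 → ℝ) (A : Matrix (I3 nu nv nw) k ℂ) :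
    longitudinalEmbedding nu nv nw s * A = Matrix.of fun r c =>
      match r with
      | Sum.inl _ => 0
      | Sum.inr (Sum.inl (a, m)) => (s a : ℂ) * A (Sum.inl m) c
      | Sum.inr (Sum.inr y) => A (Sum.inr y) c := by
  have hA : A = fromRows A.toRows₁ A.toRows₂ := (fromRows_toRows A).symm
  rw [hA, longitudinalEmbedding, fromRows_mul, fromBlocks_mul_fromRows]
  ext (m | ⟨a, m⟩ | y) c <;> simp [kroneckerCol_mul_apply]

theorem reducedSymbol_eq_longitudinal_add_transverse (lam : ℝ) (s : Fin 3 → ℝ) :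
    reducedSymbol Auu Auv Bu1u Avu Avv Avw Bv1u Awu Awv Aww Bw1u lam s
      = longitudinalEmbedding nu nv nw s * longitudinalSymbol Auu Auv Avu Avv Avw Awu Awv Aww s
        + (lam : ℂ) • transverseRotation nu nv nw s := by
  have hconstraint : ∀ (a i : Fin 3) m m',
      (if a = i then Bu1u else 0) m m' + (if a = i then -Bu1u else 0) m m' = 0 := fun a i m m' => by
    split_ifs <;> simp
  have hd : ∀ (a b : Fin 3) m m', ∑ i, (s i : ℂ) * ((if a = i then Auu b else 0) m m'
        + Complex.I * lam * (lev a i b : ℂ) * (1 : Matrix (Fin nu) (Fin nu) ℂ) m m')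
      = s a * Auu b m m' + lam * ((∑ j, Complex.I * (s j : ℂ) * (lev a j b : ℂ))
        * (1 : Matrix (Fin nu) (Fin nu) ℂ) m m') := fun a b m m' => by
    have hdelta : ∑ i, (s i : ℂ) * (if a = i then Auu b else 0) m m' = s a * Auu b m m' := by
      rw [Finset.sum_eq_single a (fun i _ hi => by simp [hi.symm]) (by simp), if_pos rfl]
    simp only [mul_add, Finset.sum_add_distrib, hdelta, Finset.mul_sum, Finset.sum_mul]
    congr 1
    exact Finset.sum_congr rfl fun i _ => by ring
  ext r c
  rw [reducedSymbol, longitudinalEmbedding_mul, longitudinalSymbol]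
  rcases r with m | ⟨a, m⟩ | p | t <;> rcases c with m' | ⟨b, m'⟩ | q | t' <;>
    simp [P2, P3, transverseRotation, longitudinalDerivativeSymbol, crossMatrix, hconstraint, hd]

end Symbols

section Uniformity

open scoped Matrix.Norms.L2Operator

theorem isCompact_setOf_sum_sq_eq_one {ι : Type*} [Fintype ι] :
    IsCompact {s : ι → ℝ | ∑ i, s i ^ 2 = 1} := by
  refine (isCompact_Icc (a := fun _ => (-1 : ℝ)) (b := fun _ => 1)).of_isClosed_subset
    (isClosed_eq (by fun_prop) continuous_const) fun s (hs : ∑ i, s i ^ 2 = 1) => ?_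
  have hle : ∀ i, |s i| ≤ 1 := fun i => (sq_le_one_iff_abs_le_one (s i)).1 <|
    (Finset.single_le_sum (fun j _ => sq_nonneg (s j)) (Finset.mem_univ i)).trans_eq hs
  exact ⟨fun i => (abs_le.1 (hle i)).1, fun i => (abs_le.1 (hle i)).2⟩

theorem continuous_P3 : Continuous (P3 Auu Auv Avu Avv Avw Awu Awv Aww) := by
  refine continuous_matrix fun r c => ?_
  rcases r with m | p | t <;> rcases c with m' | q | t' <;>
    simp only [P3, Matrix.of_apply] <;> fun_prop

theorem continuous_longitudinalSymbol :
    Continuous (longitudinalSymbol Auu Auv Avu Avv Avw Awu Awv Aww) := by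
  refine continuous_matrix fun r c => ?_
  rcases c with _ | c | y
  · exact continuous_const
  · rcases r with m | p | t <;>
      simp only [longitudinalSymbol, longitudinalDerivativeSymbol, fromCols_apply_inr,
        fromCols_apply_inl, Matrix.of_apply] <;>
      fun_prop
  · exact (continuous_P3 Auu Auv Avu Avv Avw Awu Awv Aww).matrix_elem r (Sum.inr y)

theorem exists_norm_P3_le :
    ∃ p : ℝ, ∀ s : Fin 3 → ℝ, ∑ i, s i ^ 2 = 1 →
      ‖P3 Auu Auv Avu Avv Avw Awu Awv Aww s‖ ≤ p :=
  isCompact_setOf_sum_sq_eq_one.exists_bound_of_continuousOn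
    (continuous_P3 Auu Auv Avu Avv Avw Awu Awv Aww).continuousOn

theorem IsSymmetrizer.exists_reducedSymbol {M p C lam : ℝ} {s : Fin 3 → ℝ}
    {H : Matrix (I3 nu nv nw) (I3 nu nv nw) ℂ} (hs : ∑ i, s i ^ 2 = 1)
    (h : IsSymmetrizer M H (P3 Auu Auv Avu Avv Avw Awu Awv Aww s))
    (hp : ‖P3 Auu Auv Avu Avv Avw Awu Awv Aww s‖ ≤ p) (hlam : p < lam)
    (hC : ‖longitudinalSymbol Auu Auv Avu Avv Avw Awu Awv Aww s‖ ≤ C) :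
    ∃ H', IsSymmetrizer (max M 1 * (1 + C / (lam - p)) ^ 2) H'
      (reducedSymbol Auu Auv Bu1u Avu Avv Avw Bv1u Awu Awv Aww Bw1u lam s) := by
  rw [← longitudinalSymbol_mul_longitudinalEmbedding] at h hp
  rw [reducedSymbol_eq_longitudinal_add_transverse]
  exact h.exists_of_compression (conjTranspose_longitudinalEmbedding_mul_self hs)
    (isHermitian_transverseRotation s) (transverseRotation_pow_three hs)
    (transverseRotation_mul_longitudinalEmbedding s)
    (longitudinalSymbol_mul_projection Auu Auv Avu Avv Avw Awu Awv Aww hs) hp hlam hC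

theorem exists_uniform_symmetrizer_reducedSymbol {M p lam : ℝ}
    (h : ∀ s : Fin 3 → ℝ, ∑ i, s i ^ 2 = 1 →
      ∃ H, IsSymmetrizer M H (P3 Auu Auv Avu Avv Avw Awu Awv Aww s))
    (hp : ∀ s : Fin 3 → ℝ, ∑ i, s i ^ 2 = 1 → ‖P3 Auu Auv Avu Avv Avw Awu Awv Aww s‖ ≤ p)
    (hlam : p < lam) :
    ∃ M' > 0, ∀ s : Fin 3 → ℝ, ∑ i, s i ^ 2 = 1 → ∃ H', IsSymmetrizer M' H'
      (reducedSymbol Auu Auv Bu1u Avu Avv Avw Bv1u Awu Awv Aww Bw1u lam s) := by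
  obtain ⟨C, hC⟩ : ∃ C : ℝ, ∀ s : Fin 3 → ℝ, ∑ i, s i ^ 2 = 1 →
      ‖longitudinalSymbol Auu Auv Avu Avv Avw Awu Awv Aww s‖ ≤ C :=
    isCompact_setOf_sum_sq_eq_one.exists_bound_of_continuousOn
      (continuous_longitudinalSymbol Auu Auv Avu Avv Avw Awu Awv Aww).continuousOn
  have hsymm : ∀ s : Fin 3 → ℝ, ∑ i, s i ^ 2 = 1 → ∃ H',
      IsSymmetrizer (max M 1 * (1 + C / (lam - p)) ^ 2) H'
        (reducedSymbol Auu Auv Bu1u Avu Avv Avw Bv1u Awu Awv Aww Bw1u lam s) := fun s hs => by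
    obtain ⟨H, hH⟩ := h s hs
    exact hH.exists_reducedSymbol Auu Auv Bu1u Avu Avv Avw Bv1u Awu Awv Aww Bw1u hs (hp s hs)
      hlam (hC s hs)
  obtain ⟨_, hpole⟩ := hsymm ![1, 0, 0] (by simp [Fin.sum_univ_three])
  exact ⟨_, hpole.pos, hsymm⟩

end Uniformity

/-- FT3S strong hyperbolicity implies the existence of a strongly hyperbolic
FT2S reduction; one may take the partial choice `D^u = -A^u_u`, `D_a{}^j = -B^u_{1u}δ_a^j`,
`D^v = -B^v_{1u}`, `D^w = -B^w_{1u}`, `D̄^u = D̄^v = D̄^w = 0` and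
`D̄_a{}^{jb} = iλ ε_a{}^{jb}` with `λ` larger than the operator norm of `P₃(s)` for every
unit `s`; then `P₂(s)` is uniformly diagonalizable with real eigenvalues.  In particular
the system is FT2S strongly hyperbolic. -/
theorem stmt_1
    (M3 : ℝ) (hM3 : 0 < M3)
    (H3 : (Fin 3 → ℝ) → Matrix (I3 nu nv nw) (I3 nu nv nw) ℂ)
    (hH3 : ∀ s : Fin 3 → ℝ, (∑ i, s i ^ 2) = 1 →
      (H3 s).IsHermitian ∧
      H3 s * P3 Auu Auv Avu Avv Avw Awu Awv Aww s
        = (P3 Auu Auv Avu Avv Avw Awu Awv Aww s)ᴴ * H3 s ∧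
      loewnerLE (((M3⁻¹ : ℝ) : ℂ) • 1) (H3 s) ∧
      loewnerLE (H3 s) (((M3 : ℝ) : ℂ) • 1)) :
    ∃ lam : ℝ,
      (∀ s : Fin 3 → ℝ, (∑ i, s i ^ 2) = 1 →
        matOpNorm (P3 Auu Auv Avu Avv Avw Awu Awv Aww s) < lam) ∧
      ∃ K : ℝ, 0 < K ∧
        (∀ s : Fin 3 → ℝ, (∑ i, s i ^ 2) = 1 →
          ∃ T Tinv : Matrix (I2 nu nv nw) (I2 nu nv nw) ℂ,
            T * Tinv = 1 ∧ Tinv * T = 1 ∧ matOpNorm T ≤ K ∧ matOpNorm Tinv ≤ K ∧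
            ∃ Λ : I2 nu nv nw → ℝ,
              Tinv *
                  P2 Auu Auv Bu1u Avu Avv Avw Bv1u Awu Awv Aww Bw1u
                    (fun j => -Auu j)
                    (fun _ _ => 0)
                    (fun a j => if a = j then -Bu1u else 0)
                    (fun a j b =>
                      (Complex.I * (lam : ℂ) * (lev a j b : ℂ)) •
                        (1 : Matrix (Fin nu) (Fin nu) ℂ))
                    (fun j => -Bv1u j)
                    (fun _ _ => 0)
                    (fun p j => -Bw1u p j)
                    (fun _ _ _ => 0) s * T
                = Matrix.diagonal (fun r => (Λ r : ℂ))) ∧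
        (∃ M2 : ℝ, 0 < M2 ∧ ∀ s : Fin 3 → ℝ, (∑ i, s i ^ 2) = 1 →
          ∃ H2 : Matrix (I2 nu nv nw) (I2 nu nv nw) ℂ,
            H2.IsHermitian ∧
            H2 * P2 Auu Auv Bu1u Avu Avv Avw Bv1u Awu Awv Aww Bw1u
                (fun j => -Auu j) (fun _ _ => 0)
                (fun a j => if a = j then -Bu1u else 0)
                (fun a j b =>
                  (Complex.I * (lam : ℂ) * (lev a j b : ℂ)) •
                    (1 : Matrix (Fin nu) (Fin nu) ℂ))
                (fun j => -Bv1u j) (fun _ _ => 0) (fun p j => -Bw1u p j)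
                (fun _ _ _ => 0) s
              = (P2 Auu Auv Bu1u Avu Avv Avw Bv1u Awu Awv Aww Bw1u
                  (fun j => -Auu j) (fun _ _ => 0)
                  (fun a j => if a = j then -Bu1u else 0)
                  (fun a j b =>
                    (Complex.I * (lam : ℂ) * (lev a j b : ℂ)) •
                      (1 : Matrix (Fin nu) (Fin nu) ℂ))
                  (fun j => -Bv1u j) (fun _ _ => 0) (fun p j => -Bw1u p j)
                  (fun _ _ _ => 0) s)ᴴ * H2 ∧
            loewnerLE (((M2⁻¹ : ℝ) : ℂ) • 1) H2 ∧
            loewnerLE H2 (((M2 : ℝ) : ℂ) • 1)) := by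
  simp only [loewnerLE_iff_le] at hH3
  simp only [matOpNorm_eq_norm, loewnerLE_iff_le]
  obtain ⟨p, hp⟩ := exists_norm_P3_le Auu Auv Avu Avv Avw Awu Awv Aww
  have hP3 : ∀ s : Fin 3 → ℝ, ∑ i, s i ^ 2 = 1 →
      ∃ H, IsSymmetrizer M3 H (P3 Auu Auv Avu Avv Avw Awu Awv Aww s) := fun s hs => by
    obtain ⟨hherm, hmul, hlower, hupper⟩ := hH3 s hs
    exact ⟨H3 s, hM3, hherm, hmul, hlower, hupper⟩
  obtain ⟨M2, hM2, hP2⟩ := exists_uniform_symmetrizer_reducedSymbol Auu Auv Bu1u Avu Avv Avw Bv1u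
    Awu Awv Aww Bw1u hP3 hp (lt_add_one p)
  refine ⟨p + 1, fun s hs => (hp s hs).trans_lt (lt_add_one p), √M2, Real.sqrt_pos.2 hM2,
    fun s hs => ?_, M2, hM2, fun s hs => ?_⟩
  · obtain ⟨H2, h⟩ := hP2 s hs
    exact h.exists_diagonalization
  · obtain ⟨H2, h⟩ := hP2 s hs
    exact ⟨H2, h.isHermitian, h.mul_eq, h.inv_smul_one_le, h.le_smul_one⟩
end

section
/- For every N >= 2: if an FTNS system is first-order symmetric hyperbolic, then it is FTNS symmetric hyperbolic. Precisely: if for some admissible reduction parameters D^p there is a constant Hermitian positive-definite H1 on the first-order state space with H1 A1^p Hermitian for every p in {1,2,3}, then the diagonal block H22 of H1 corresponding to the top-level variables (d^0, d^1, ..., d^{N-2}, v^{N-1}) is an FTNS symmetrizer: H22 is Hermitian, positive definite on W_N, and (iota_s* H22 iota_s) P_N(s) is Hermitian for every unit s in R^3. -/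
open Matrix

/-- Index type for the FTNS state `(v⁰, …, v^{N-1})`. -/
abbrev IN (N : ℕ) (n : ℕ → ℕ) : Type := Σ μ : Fin N, Fin (n μ)

/-- Index type for the reduction variables `(d^μ_ν)_{i₁…i_ν}` (`μ ≤ N-2`,
`1 ≤ ν ≤ N-μ-1`), with tensor indices written out in full. -/
abbrev ID (N : ℕ) (n : ℕ → ℕ) : Type :=
  Σ μ : Fin (N - 1), Σ ν : Fin (N - 1 - (μ : ℕ)), ((Fin ((ν : ℕ) + 1) → Fin 3) × Fin (n μ))

/-- Index type for the full first-order state. -/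
abbrev I1N (N : ℕ) (n : ℕ → ℕ) : Type := IN N n ⊕ ID N n

/-- Index type for `W_N = ⊕_μ Sym^{N-μ-1}(ℂ³) ⊗ ℂ^{n_μ}` (tensor indices written in
full; `W_N` consists of the vectors symmetric in the tensor indices). -/
abbrev IWN (N : ℕ) (n : ℕ → ℕ) : Type :=
  Σ μ : Fin N, ((Fin (N - 1 - (μ : ℕ)) → Fin 3) × Fin (n μ))

variable (N : ℕ) (n : ℕ → ℕ)
  (A : (μ ν : ℕ) → (Fin (μ - ν + 1) → Fin 3) → Matrix (Fin (n μ)) (Fin (n ν)) ℂ)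
  (A' : (μ : ℕ) → Matrix (Fin (n μ)) (Fin (n (μ + 1))) ℂ)

/-- The FTNS principal symbol `P_N(s)`. -/
noncomputable def PN (s : Fin 3 → ℝ) : Matrix (IN N n) (IN N n) ℂ :=
  Matrix.of fun r c =>
    if h1 : (c.1 : ℕ) ≤ (r.1 : ℕ) then
      ∑ k : Fin ((r.1 : ℕ) - (c.1 : ℕ) + 1) → Fin 3,
        (∏ t, (s (k t) : ℂ)) * A r.1 c.1 k r.2 c.2
    else if h2 : (c.1 : ℕ) = (r.1 : ℕ) + 1 then
      A' r.1 r.2 (Fin.cast (congrArg n h2) c.2)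
    else 0

/-- The principal matrices `A₀^p` of the direct first-order reduction (without the
reduction-parameter additions): nonzero blocks only in the rows of the top-level
variables `d^μ` (`μ ≤ N-2`) and of `v^{N-1}`, built from the symmetrized
`Δ`-contractions of the `A^μ_ν`. -/
noncomputable def A0N (p : Fin 3) : Matrix (I1N N n) (I1N N n) ℂ :=
  Matrix.of fun r c =>
    match r, c with
    | Sum.inl ⟨μr, m⟩, Sum.inl ⟨νc, q⟩ =>
        if h : (μr : ℕ) = N - 1 ∧ (νc : ℕ) = N - 1 then
          A (N - 1) (N - 1) (fun _ => p)
            (Fin.cast (congrArg n h.1) m) (Fin.cast (congrArg n h.2) q)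
        else 0
    | Sum.inl ⟨μr, m⟩, Sum.inr ⟨μc, νc, j, b⟩ =>
        if h : (μr : ℕ) = N - 1 ∧ (νc : ℕ) + 1 = N - 1 - (μc : ℕ) then
          A (N - 1) μc
            (fun t : Fin ((N - 1) - (μc : ℕ) + 1) =>
              if h0 : (t : ℕ) = 0 then p
              else j ⟨(t : ℕ) - 1, by
                obtain ⟨h1, h2⟩ := h; have := t.isLt; omega⟩)
            (Fin.cast (congrArg n h.1) m) b
        else 0
    | Sum.inr ⟨μr, νr, i, m⟩, Sum.inl ⟨νc, q⟩ =>
        if h : (νr : ℕ) + 1 = N - 1 - (μr : ℕ) ∧ (νc : ℕ) = N - 1 ∧ (μr : ℕ) + 1 = N - 1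
        then
          (if i ⟨0, Nat.succ_pos _⟩ = p then 1 else 0) *
            A' μr m
              (Fin.cast (congrArg n (show (νc : ℕ) = (μr : ℕ) + 1 by
                obtain ⟨h1, h2, h3⟩ := h; omega)) q)
        else 0
    | Sum.inr ⟨μr, νr, i, m⟩, Sum.inr ⟨μc, νc, j, b⟩ =>
        if h : (νr : ℕ) + 1 = N - 1 - (μr : ℕ) ∧ (νc : ℕ) + 1 = N - 1 - (μc : ℕ) ∧
            (μc : ℕ) ≤ (μr : ℕ) + 1 then
          ((Nat.factorial ((νc : ℕ) + 2) : ℂ) * (Nat.factorial ((νr : ℕ) + 1) : ℂ))⁻¹ *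
            ∑ σ : Equiv.Perm (Fin ((νc : ℕ) + 2)), ∑ τ : Equiv.Perm (Fin ((νr : ℕ) + 1)),
              (∏ t : Fin ((νr : ℕ) + 1),
                (if i (τ t) =
                    (fun u : Fin ((νc : ℕ) + 2) =>
                      if h0 : (u : ℕ) = 0 then p
                      else j ⟨(u : ℕ) - 1, by have := u.isLt; omega⟩)
                      (σ ⟨(t : ℕ), by
                        obtain ⟨h1, h2, h3⟩ := h; have := t.isLt
                        have := μr.isLt; have := μc.isLt; omega⟩)
                  then 1 else 0 : ℂ)) *
              (if hA : (μc : ℕ) ≤ (μr : ℕ) then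
                A μr μc
                  (fun t' : Fin ((μr : ℕ) - (μc : ℕ) + 1) =>
                    (fun u : Fin ((νc : ℕ) + 2) =>
                      if h0 : (u : ℕ) = 0 then p
                      else j ⟨(u : ℕ) - 1, by have := u.isLt; omega⟩)
                      (σ ⟨(νr : ℕ) + 1 + (t' : ℕ), by
                        obtain ⟨h1, h2, h3⟩ := h; have := t'.isLt
                        have := μr.isLt; have := μc.isLt; omega⟩))
                  m b
              else
                A' μr m
                  (Fin.cast (congrArg n (show (μc : ℕ) = (μr : ℕ) + 1 by
                    obtain ⟨h1, h2, h3⟩ := h; omega)) b))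
        else 0

/-- Admissibility of the reduction parameters `D^p` of the direct first-order
reduction: zero on the column of `v^{N-1}`; arbitrary on the columns of the `v^μ`
(`μ ≤ N-2`) and of the lower-level `d^μ_ν`; on the column of each top-level `d^ν`
symmetric in the upper indices `(j₁…j_{N-ν-1})` with vanishing total symmetrization over
`(p, j₁, …, j_{N-ν-1})`; and symmetric in the lower multi-index of each row. -/
def AdmissibleDN (N : ℕ) (n : ℕ → ℕ)
    (D : Fin 3 → Matrix (I1N N n) (I1N N n) ℂ) : Prop :=
  (∀ (p : Fin 3) (r : I1N N n) (νc : Fin N) (q : Fin (n νc)),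
      (νc : ℕ) = N - 1 → D p r (Sum.inl ⟨νc, q⟩) = 0) ∧
  (∀ (p : Fin 3) (r : I1N N n) (μc : Fin (N - 1)) (νc : Fin (N - 1 - (μc : ℕ)))
      (j : Fin ((νc : ℕ) + 1) → Fin 3) (b : Fin (n μc)),
      (νc : ℕ) + 1 = N - 1 - (μc : ℕ) →
      ∀ σ : Equiv.Perm (Fin ((νc : ℕ) + 1)),
        D p r (Sum.inr ⟨μc, νc, j ∘ σ, b⟩) = D p r (Sum.inr ⟨μc, νc, j, b⟩)) ∧
  (∀ (p : Fin 3) (r : I1N N n) (μc : Fin (N - 1)) (νc : Fin (N - 1 - (μc : ℕ)))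
      (j : Fin ((νc : ℕ) + 1) → Fin 3) (b : Fin (n μc)),
      (νc : ℕ) + 1 = N - 1 - (μc : ℕ) →
      ∑ σ : Equiv.Perm (Fin ((νc : ℕ) + 2)),
        D ((fun u : Fin ((νc : ℕ) + 2) =>
              if h0 : (u : ℕ) = 0 then p
              else j ⟨(u : ℕ) - 1, by have := u.isLt; omega⟩) (σ 0))
          r
          (Sum.inr ⟨μc, νc,
            (fun t' : Fin ((νc : ℕ) + 1) =>
              (fun u : Fin ((νc : ℕ) + 2) =>
                if h0 : (u : ℕ) = 0 then p
                else j ⟨(u : ℕ) - 1, by have := u.isLt; omega⟩) (σ t'.succ)), b⟩)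
        = 0) ∧
  (∀ (p : Fin 3) (μ : Fin (N - 1)) (ν : Fin (N - 1 - (μ : ℕ)))
      (i : Fin ((ν : ℕ) + 1) → Fin 3) (m : Fin (n μ)) (c : I1N N n)
      (σ : Equiv.Perm (Fin ((ν : ℕ) + 1))),
      D p (Sum.inr ⟨μ, ν, i ∘ σ, m⟩) c = D p (Sum.inr ⟨μ, ν, i, m⟩) c)

/-- The embedding of `W_N` (the block of the top-level variables
`(d⁰, …, d^{N-2}, v^{N-1})`) into the first-order state space. -/
def embN (N : ℕ) (n : ℕ → ℕ) (r : IWN N n) : I1N N n :=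
  if h : (r.1 : ℕ) = N - 1 then Sum.inl ⟨r.1, r.2.2⟩
  else
    Sum.inr ⟨⟨(r.1 : ℕ), by have := r.1.isLt; omega⟩,
      ⟨⟨N - 2 - (r.1 : ℕ),
          show N - 2 - (r.1 : ℕ) < N - 1 - (r.1 : ℕ) by have := r.1.isLt; omega⟩,
        (fun t => r.2.1
          (Fin.cast
            (show N - 2 - (r.1 : ℕ) + 1 = N - 1 - (r.1 : ℕ) by
              have := r.1.isLt; omega) t), r.2.2)⟩⟩

/-- The map `ι_s` sending `(y⁰, …, y^{N-1})` to the tuple with components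
`s_{i₁} ⋯ s_{i_{N-μ-1}} y^μ`. -/
noncomputable def iotaN (N : ℕ) (n : ℕ → ℕ) (s : Fin 3 → ℝ) :
    Matrix (IWN N n) (IN N n) ℂ :=
  Matrix.of fun r c =>
    if h : r.1 = c.1 then
      (∏ t, (s (r.2.1 t) : ℂ)) *
        (if r.2.2 = Fin.cast (congrArg (fun x : Fin N => n (x : ℕ)) h).symm c.2
          then 1 else 0)
    else 0

/-!
For `E = planeWave N n s`, the first-order states `ι_s y` concentrated on the top-level variables,
the theorem rests on the intertwining relation `(∑ p, s p • (A₀^p + D^p)) * E = E * P_N(s)`.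
Every column of the left-hand side is a contraction with `s ⊗ ⋯ ⊗ s`, and such a contraction sees
only the total symmetrization of a tensor: it annihilates `D^p`, and it turns the symmetrized
Kronecker deltas in `A₀^p` into the factors `s_{i₁} ⋯ s_{i_{N-μ-1}}` of `E` times the entries of
`P_N(s)`. Hence `ι_s* H₂₂ ι_s P_N(s) = E* (H₁ A₁(s)) E` is Hermitian, and `H₂₂` is positive definite
because it is the restriction of the form `H₁` to the states supported on the top-level variables.
-/

section Contraction

variable {ι κ α R M K : Type*} [Fintype ι] [DecidableEq ι] [Fintype κ] [DecidableEq κ] [Fintype α]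

/-- The contraction `∑ s_{J₁} ⋯ s_{J_M} F_J` of a tensor `F` with the power `s ⊗ ⋯ ⊗ s` of a
covector. The slots are labelled by an arbitrary type `ι`, so that permuting, casting and
splitting slots are all reindexings along an equivalence. -/
def contractPow [CommSemiring R] [AddCommMonoid M] [Module R M] (s : α → R) (F : (ι → α) → M) :
    M :=
  ∑ J, (∏ t, s (J t)) • F J

section Module

variable [CommSemiring R] [AddCommMonoid M] [Module R M] (s : α → R)

lemma contractPow_comp_equiv (e : ι ≃ κ) (F : (ι → α) → M) :
    contractPow s (fun J : κ → α => F (J ∘ e)) = contractPow s F :=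
  Fintype.sum_equiv (e.symm.arrowCongr (.refl α)) _ _ fun J =>
    congrArg (· • F (J ∘ e)) (e.prod_comp fun t => s (J t)).symm

lemma contractPow_sum {X : Type*} (t : Finset X) (F : X → (ι → α) → M) :
    contractPow s (fun J => ∑ x ∈ t, F x J) = ∑ x ∈ t, contractPow s (F x) := by
  simp only [contractPow, Finset.smul_sum]
  exact Finset.sum_comm

lemma contractPow_of_isEmpty [IsEmpty ι] (F : (ι → α) → M) :
    contractPow s F = F isEmptyElim := by
  simp [contractPow, Subsingleton.elim default (isEmptyElim : ι → α)]

lemma contractPow_of_unique [Unique ι] (F : (ι → α) → M) :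
    contractPow s F = ∑ p, s p • F fun _ => p := by
  rw [contractPow, ← (Equiv.funUnique ι α).symm.sum_comp]
  simp only [Fintype.prod_unique]
  rfl

lemma contractPow_fin_succ {l : ℕ} (F : (Fin (l + 1) → α) → M) :
    contractPow s F = ∑ p, s p • contractPow s fun j => F (Fin.cons p j) := by
  simp only [contractPow, Finset.smul_sum, smul_smul]
  rw [← (Fin.consEquiv fun _ => α).sum_comp, Fintype.sum_prod_type]
  simp [Fin.consEquiv, Fin.prod_univ_succ]

lemma contractPow_eq_zero_of_sum_perm [IsAddTorsionFree M] {F : (ι → α) → M}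
    (hF : ∀ J, ∑ σ : Equiv.Perm ι, F (J ∘ σ) = 0) : contractPow s F = 0 := by
  have card_nsmul : Fintype.card (Equiv.Perm ι) • contractPow s F = 0 :=
    calc Fintype.card (Equiv.Perm ι) • contractPow s F
        = ∑ σ : Equiv.Perm ι, contractPow s fun J => F (J ∘ σ) := by
          simp [contractPow_comp_equiv]
      _ = contractPow s fun J => ∑ σ : Equiv.Perm ι, F (J ∘ σ) := (contractPow_sum s _ _).symm
      _ = 0 := by simp [hF, contractPow]
  exact (nsmul_eq_zero_iff_right Fintype.card_ne_zero).1 card_nsmul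

end Module

section Algebra

variable [CommSemiring R] [CommSemiring K] [Algebra R K] (s : α → R)

lemma contractPow_const_mul (c : K) (F : (ι → α) → K) :
    contractPow s (fun J => c * F J) = c * contractPow s F := by
  simp only [contractPow, Finset.mul_sum, mul_smul_comm]

lemma contractPow_prod_delta_mul [DecidableEq α] (i : ι → α) (G : (κ → α) → K) :
    contractPow s (fun J : ι ⊕ κ → α =>
        (∏ t, if i t = J (.inl t) then (1 : K) else 0) * G (J ∘ .inr)) =
      (∏ t, s (i t)) • contractPow s G := by
  rw [contractPow, ← (Equiv.sumArrowEquivProdArrow ι κ α).symm.sum_comp, Fintype.sum_prod_type,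
    Fintype.sum_eq_single i]
  · simp [contractPow, Finset.smul_sum, mul_smul, Equiv.sumArrowEquivProdArrow, Function.comp_def]
  · intro j hj
    obtain ⟨t, ht⟩ := Function.ne_iff.1 hj
    exact Finset.sum_eq_zero fun k _ => smul_eq_zero_of_right _ <|
      mul_eq_zero_of_left (Finset.prod_eq_zero (Finset.mem_univ t) (if_neg ht.symm)) _

end Algebra

/-- The contraction `Δ^J_{i,k} G_k` of a coefficient tensor `G` with the product of Kronecker
deltas matching the indices `J` with those of `i` followed by those of `k`, symmetrized over `J`
and over `i`. -/
def symDelta [DecidableEq α] [Field K] {a L m : ℕ} (h : a + L = m) (i : Fin a → α)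
    (G : (Fin L → α) → K) (J : Fin m → α) : K :=
  ((m.factorial : K) * a.factorial)⁻¹ * ∑ σ : Equiv.Perm (Fin m), ∑ τ : Equiv.Perm (Fin a),
    (∏ t, if i (τ t) = J (σ (Fin.cast h (Fin.castAdd L t))) then 1 else 0) *
      G fun t => J (σ (Fin.cast h (Fin.natAdd a t)))

lemma contractPow_symDelta [DecidableEq α] [CommSemiring R] [Field K] [CharZero K] [Algebra R K]
    (s : α → R) {a L m : ℕ} (h : a + L = m) (i : Fin a → α) (G : (Fin L → α) → K) :
    contractPow s (symDelta h i G) = (∏ t, s (i t)) • contractPow s G := by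
  have summand (σ : Equiv.Perm (Fin m)) (τ : Equiv.Perm (Fin a)) :
      contractPow s (fun J : Fin m → α =>
        (∏ t, if i (τ t) = J (σ (Fin.cast h (Fin.castAdd L t))) then (1 : K) else 0) *
          G fun t => J (σ (Fin.cast h (Fin.natAdd a t)))) =
        (∏ t, s (i t)) • contractPow s G := by
    have reindexed := contractPow_prod_delta_mul s (i ∘ τ) G
    rw [← contractPow_comp_equiv s ((finSumFinEquiv.trans (finCongr h)).trans σ)] at reindexed
    rw [← Equiv.prod_comp τ fun t => s (i t)]
    exact reindexed
  unfold symDelta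
  simp only [contractPow_const_mul, contractPow_sum, summand, Finset.sum_const, Finset.card_univ,
    Fintype.card_perm, Fintype.card_fin, nsmul_eq_mul]
  rw [← mul_assoc _ (a.factorial : K), inv_mul_cancel_left₀]
  exact mul_ne_zero (Nat.cast_ne_zero.2 m.factorial_ne_zero)
    (Nat.cast_ne_zero.2 a.factorial_ne_zero)

end Contraction

section Compression

variable {l m o 𝕜 : Type*} [DecidableEq m]

/-- The matrix of the inclusion of `l`-indexed vectors into `m`-indexed ones which places the
`w`-th coordinate in position `f w`. -/
def coordInclusion (𝕜 : Type*) [Zero 𝕜] [One 𝕜] (f : l → m) : Matrix m l 𝕜 :=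
  (1 : Matrix m m 𝕜).submatrix id f

section Semiring

variable [Semiring 𝕜]

lemma mul_coordInclusion [Fintype m] (f : l → m) (X : Matrix o m 𝕜) :
    X * coordInclusion 𝕜 f = X.submatrix id f :=
  Matrix.mul_submatrix_one (.refl m) f X

lemma coordInclusion_mulVec [Fintype l] {f : l → m} (hf : f.Injective) (y : l → 𝕜) :
    coordInclusion 𝕜 f *ᵥ y = Function.extend f y 0 := by
  classical
  ext r
  by_cases hr : ∃ w, f w = r
  · obtain ⟨w, rfl⟩ := hr
    simp [coordInclusion, Matrix.mulVec, dotProduct, Matrix.one_apply, hf.eq_iff, hf.extend_apply]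
  · rw [Function.extend_apply' _ _ _ hr]
    refine Finset.sum_eq_zero fun w _ => ?_
    exact mul_eq_zero_of_left (Matrix.one_apply_ne fun h => hr ⟨w, h.symm⟩) _

lemma coordInclusion_mul_apply [Fintype l] {f : l → m} (hf : f.Injective) (X : Matrix l o 𝕜)
    (r : m) (c : o) :
    (coordInclusion 𝕜 f * X) r c = Function.extend f (fun w => X w c) 0 r :=
  congrFun (coordInclusion_mulVec hf fun w => X w c) r

end Semiring

section StarRing

variable [Fintype m] [Semiring 𝕜] [StarRing 𝕜]

lemma submatrix_eq_coordInclusion (f : l → m) (H : Matrix m m 𝕜) :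
    H.submatrix f f = (coordInclusion 𝕜 f)ᴴ * H * coordInclusion 𝕜 f := by
  rw [mul_coordInclusion, coordInclusion, Matrix.conjTranspose_submatrix,
    Matrix.conjTranspose_one]
  exact congrArg (Matrix.submatrix · id f) (Matrix.one_submatrix_mul f (.refl m) H).symm

omit [DecidableEq m] in
lemma star_dotProduct_submatrix_mulVec [Fintype l] {f : l → m} (hf : f.Injective)
    (H : Matrix m m 𝕜) (y : l → 𝕜) :
    star y ⬝ᵥ H.submatrix f f *ᵥ y =
      star (Function.extend f y 0) ⬝ᵥ H *ᵥ Function.extend f y 0 := by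
  classical
  rw [submatrix_eq_coordInclusion, ← coordInclusion_mulVec hf, Matrix.star_mulVec,
    ← Matrix.dotProduct_mulVec, Matrix.mulVec_mulVec, Matrix.mulVec_mulVec, Matrix.mul_assoc]

lemma isHermitian_compression_mul_of_intertwines [Fintype l] [Fintype o]
    {f : l → m} {H S : Matrix m m 𝕜} (hHS : (H * S).IsHermitian) {T : Matrix l o 𝕜}
    {P : Matrix o o 𝕜}
    (hSP : S * (coordInclusion 𝕜 f * T) = coordInclusion 𝕜 f * T * P) :
    (Tᴴ * H.submatrix f f * T * P).IsHermitian := by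
  have factor : Tᴴ * H.submatrix f f * T * P =
      (coordInclusion 𝕜 f * T)ᴴ * (H * S) * (coordInclusion 𝕜 f * T) := by
    simp only [submatrix_eq_coordInclusion, Matrix.conjTranspose_mul, Matrix.mul_assoc] at hSP ⊢
    rw [hSP]
  exact factor ▸ Matrix.isHermitian_conjTranspose_mul_mul _ hHS

end StarRing

end Compression

lemma isHermitian_mul_sum_smul {m X R 𝕜 : Type*} [Fintype m] [Fintype X] [CommSemiring R]
    [StarRing R] [TrivialStar R] [Semiring 𝕜] [StarRing 𝕜] [Algebra R 𝕜] [StarModule R 𝕜]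
    {H : Matrix m m 𝕜} {B : X → Matrix m m 𝕜} (hHB : ∀ p, (H * B p).IsHermitian) (s : X → R) :
    (H * ∑ p, s p • B p).IsHermitian := by
  simp only [Matrix.mul_sum, Matrix.mul_smul]
  exact isSelfAdjoint_sum _ fun p _ => (hHB p).smul (.all (s p))

lemma prod_ofReal_mul {ι α : Type*} [Fintype ι] (s : α → ℝ) (J : ι → α) (z : ℂ) :
    (∏ t, (s (J t) : ℂ)) * z = (∏ t, s (J t)) • z := by
  rw [Complex.real_smul, Complex.ofReal_prod]

section Symbols

variable {N n}

section Index

/-- A level `μ ≤ N - 2`, at which the top-level variable is a reduction variable `d^μ`, as one of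
the levels `0, …, N - 1` of the FTNS system. -/
abbrev lowerLevel (μ : Fin (N - 1)) : Fin N := μ.castLE (Nat.sub_le N 1)

lemma eq_last_or_exists_lower (κ : Fin N) :
    (κ : ℕ) = N - 1 ∨ ∃ (μ : Fin (N - 1)) (ν : Fin (N - 1 - (μ : ℕ))),
      (ν : ℕ) + 1 = N - 1 - (μ : ℕ) ∧ κ = lowerLevel μ := by
  refine or_iff_not_imp_left.2 fun hκ => ?_
  exact ⟨⟨κ, by omega⟩, ⟨N - 2 - κ, by dsimp only; omega⟩, by dsimp only; omega, rfl⟩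

lemma isEmpty_fin_of_eq_last {μ : ℕ} (hμ : μ = N - 1) : IsEmpty (Fin (N - 1 - μ)) := by
  rw [hμ, Nat.sub_self]
  infer_instance

@[elab_as_elim]
lemma IWN_cases {motive : IWN N n → Prop}
    (last : ∀ (μ : Fin N) i m, (μ : ℕ) = N - 1 → motive ⟨μ, i, m⟩)
    (lower : ∀ (μ : Fin (N - 1)) (ν : Fin (N - 1 - (μ : ℕ))) (i : Fin ((ν : ℕ) + 1) → Fin 3)
      (m : Fin (n μ)) (hν : (ν : ℕ) + 1 = N - 1 - (μ : ℕ)),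
      motive ⟨lowerLevel μ, i ∘ Fin.cast hν.symm, m⟩)
    (w : IWN N n) : motive w := by
  obtain ⟨κ, i, m⟩ := w
  obtain hκ | ⟨μ, ν, hν, rfl⟩ := eq_last_or_exists_lower κ
  · exact last κ i m hκ
  · exact lower μ ν (i ∘ Fin.cast hν) m hν

lemma embN_last {μ : Fin N} (hμ : (μ : ℕ) = N - 1) (i : Fin (N - 1 - (μ : ℕ)) → Fin 3)
    (m : Fin (n μ)) : embN N n ⟨μ, i, m⟩ = Sum.inl ⟨μ, m⟩ :=
  dif_pos hμ

lemma embN_lower {μ : Fin (N - 1)} {ν : Fin (N - 1 - (μ : ℕ))} (hν : (ν : ℕ) + 1 = N - 1 - (μ : ℕ))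
    (i : Fin ((ν : ℕ) + 1) → Fin 3) (m : Fin (n μ)) :
    embN N n ⟨lowerLevel μ, i ∘ Fin.cast hν.symm, m⟩ = Sum.inr ⟨μ, ν, i, m⟩ := by
  have hμ := μ.isLt
  obtain ⟨v, hv⟩ := ν
  obtain rfl : v = N - 2 - (μ : ℕ) := by dsimp only at hν; omega
  exact dif_neg (by dsimp only [Fin.val_castLE]; omega)

lemma embN_injective : Function.Injective (embN N n) := by
  intro w w' h
  induction w using IWN_cases with
  | last μ i m hμ =>
    rw [embN_last hμ] at h
    induction w' using IWN_cases with
    | last μ' i' m' hμ' =>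
      rw [embN_last hμ'] at h
      cases h
      have := isEmpty_fin_of_eq_last hμ
      rw [Subsingleton.elim i i']
    | lower μ' ν' i' m' hν' =>
      rw [embN_lower hν'] at h
      cases h
  | lower μ ν i m hν =>
    rw [embN_lower hν] at h
    induction w' using IWN_cases with
    | last μ' i' m' hμ' =>
      rw [embN_last hμ'] at h
      cases h
    | lower μ' ν' i' m' hν' =>
      rw [embN_lower hν'] at h
      cases h
      rfl

lemma inl_mem_range_embN_iff {μ : Fin N} {m : Fin (n μ)} :
    (∃ w, embN N n w = Sum.inl ⟨μ, m⟩) ↔ (μ : ℕ) = N - 1 := by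
  refine ⟨fun ⟨w, h⟩ => ?_, fun hμ => ⟨⟨μ, 0, m⟩, embN_last hμ _ _⟩⟩
  induction w using IWN_cases with
  | last μ' i' m' hμ' => rw [embN_last hμ'] at h; cases h; exact hμ'
  | lower μ' ν' i' m' hν' => rw [embN_lower hν'] at h; cases h

lemma inr_mem_range_embN_iff {μ : Fin (N - 1)} {ν : Fin (N - 1 - (μ : ℕ))}
    {i : Fin ((ν : ℕ) + 1) → Fin 3} {m : Fin (n μ)} :
    (∃ w, embN N n w = Sum.inr ⟨μ, ν, i, m⟩) ↔ (ν : ℕ) + 1 = N - 1 - (μ : ℕ) := by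
  refine ⟨fun ⟨w, h⟩ => ?_, fun hν => ⟨_, embN_lower hν i m⟩⟩
  induction w using IWN_cases with
  | last μ' i' m' hμ' => rw [embN_last hμ'] at h; cases h
  | lower μ' ν' i' m' hν' => rw [embN_lower hν'] at h; cases h; exact hν'

lemma extend_embN_perm {y : IWN N n → ℂ}
    (hy : ∀ (μ : Fin N) (i : Fin (N - 1 - (μ : ℕ)) → Fin 3) (a : Fin (n μ))
      (σ : Equiv.Perm (Fin (N - 1 - (μ : ℕ)))), y ⟨μ, (i ∘ σ, a)⟩ = y ⟨μ, (i, a)⟩)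
    (μ : Fin (N - 1)) (ν : Fin (N - 1 - (μ : ℕ))) (i : Fin ((ν : ℕ) + 1) → Fin 3)
    (m : Fin (n μ)) (σ : Equiv.Perm (Fin ((ν : ℕ) + 1))) :
    Function.extend (embN N n) y 0 (Sum.inr ⟨μ, ν, i ∘ σ, m⟩) =
      Function.extend (embN N n) y 0 (Sum.inr ⟨μ, ν, i, m⟩) := by
  by_cases hν : (ν : ℕ) + 1 = N - 1 - (μ : ℕ)
  · rw [← embN_lower hν, ← embN_lower hν, embN_injective.extend_apply, embN_injective.extend_apply]
    exact hy (lowerLevel μ) (i ∘ Fin.cast hν.symm) m ((finCongr hν).permCongr σ)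
  · rw [Function.extend_apply' _ _ _ (inr_mem_range_embN_iff.not.2 hν),
      Function.extend_apply' _ _ _ (inr_mem_range_embN_iff.not.2 hν)]
    rfl

end Index

section PlaneWave

variable (N n) in
/-- The first-order states `ι_s y`, all of whose components other than the top-level variables
vanish: as `y` varies these are the top-derivative parts of plane waves in direction `s`. -/
noncomputable def planeWave (s : Fin 3 → ℝ) : Matrix (I1N N n) (IN N n) ℂ :=
  coordInclusion ℂ (embN N n) * iotaN N n s

variable {o : Type*} (s : Fin 3 → ℝ)

lemma mul_iotaN_apply (X : Matrix o (IWN N n) ℂ) (r : o) (c : IN N n) :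
    (X * iotaN N n s) r c = contractPow s fun j => X r ⟨c.1, j, c.2⟩ := by
  rw [Matrix.mul_apply, Fintype.sum_sigma, Fintype.sum_eq_single c.1, Fintype.sum_prod_type]
  · refine Finset.sum_congr rfl fun j _ => ?_
    rw [Fintype.sum_eq_single c.2, ← prod_ofReal_mul]
    · simp [iotaN, mul_comm]
    · intro a ha
      simp [iotaN, ha]
  · intro μ hμ
    refine Finset.sum_eq_zero fun x _ => ?_
    simp [iotaN, hμ]

lemma iotaN_mul_apply (X : Matrix (IN N n) o ℂ) (w : IWN N n) (c : o) :
    (iotaN N n s * X) w c = (∏ t, s (w.2.1 t)) • X ⟨w.1, w.2.2⟩ c := by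
  rw [Matrix.mul_apply, Fintype.sum_eq_single ⟨w.1, w.2.2⟩, ← prod_ofReal_mul]
  · simp [iotaN]
  · rintro ⟨μ, a⟩ h
    obtain ⟨κ, i, m⟩ := w
    by_cases hκ : κ = μ
    · subst hκ
      have hm : m ≠ a := fun hm => h (by rw [hm])
      simp [iotaN, hm]
    · simp [iotaN, hκ]

lemma mul_planeWave_apply (X : Matrix o (I1N N n) ℂ) (r : o) (κ : Fin N) (q : Fin (n κ)) :
    (X * planeWave N n s) r ⟨κ, q⟩ = contractPow s fun j => X r (embN N n ⟨κ, j, q⟩) := by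
  rw [planeWave, ← Matrix.mul_assoc, mul_coordInclusion, mul_iotaN_apply]
  rfl

lemma mul_planeWave_apply_last (X : Matrix o (I1N N n) ℂ) (r : o) {κ : Fin N}
    (hκ : (κ : ℕ) = N - 1) (q : Fin (n κ)) :
    (X * planeWave N n s) r ⟨κ, q⟩ = X r (Sum.inl ⟨κ, q⟩) := by
  have := isEmpty_fin_of_eq_last hκ
  rw [mul_planeWave_apply, contractPow_of_isEmpty, embN_last hκ]

lemma mul_planeWave_apply_lower (X : Matrix o (I1N N n) ℂ) (r : o) {μ : Fin (N - 1)}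
    {ν : Fin (N - 1 - (μ : ℕ))} (hν : (ν : ℕ) + 1 = N - 1 - (μ : ℕ)) (b : Fin (n μ)) :
    (X * planeWave N n s) r ⟨lowerLevel μ, b⟩ =
      contractPow s fun j : Fin ((ν : ℕ) + 1) → Fin 3 => X r (Sum.inr ⟨μ, ν, j, b⟩) := by
  rw [mul_planeWave_apply, ← contractPow_comp_equiv s (finCongr hν.symm)]
  exact congrArg _ (funext fun j => congrArg (X r) (embN_lower hν j b))

lemma planeWave_mul_apply_embN (X : Matrix (IN N n) o ℂ) (μ : Fin N)
    (i : Fin (N - 1 - (μ : ℕ)) → Fin 3) (m : Fin (n μ)) (c : o) :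
    (planeWave N n s * X) (embN N n ⟨μ, i, m⟩) c = (∏ t, s (i t)) • X ⟨μ, m⟩ c := by
  rw [planeWave, Matrix.mul_assoc, coordInclusion_mul_apply embN_injective,
    embN_injective.extend_apply, iotaN_mul_apply]

lemma planeWave_mul_apply_last (X : Matrix (IN N n) o ℂ) {μ : Fin N} (hμ : (μ : ℕ) = N - 1)
    (m : Fin (n μ)) (c : o) : (planeWave N n s * X) (Sum.inl ⟨μ, m⟩) c = X ⟨μ, m⟩ c := by
  have := isEmpty_fin_of_eq_last hμ
  rw [← embN_last hμ 0, planeWave_mul_apply_embN, Finset.prod_of_isEmpty, one_smul]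

lemma planeWave_mul_apply_lower (X : Matrix (IN N n) o ℂ) {μ : Fin (N - 1)}
    {ν : Fin (N - 1 - (μ : ℕ))} (hν : (ν : ℕ) + 1 = N - 1 - (μ : ℕ))
    (i : Fin ((ν : ℕ) + 1) → Fin 3) (m : Fin (n μ)) (c : o) :
    (planeWave N n s * X) (Sum.inr ⟨μ, ν, i, m⟩) c = (∏ t, s (i t)) • X ⟨lowerLevel μ, m⟩ c := by
  rw [← embN_lower hν, planeWave_mul_apply_embN]
  exact congrArg (· • X ⟨lowerLevel μ, m⟩ c) ((finCongr hν.symm).prod_comp fun t => s (i t))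

lemma planeWave_mul_apply_of_notMem_range (X : Matrix (IN N n) o ℂ) {r : I1N N n}
    (hr : ¬∃ w, embN N n w = r) (c : o) : (planeWave N n s * X) r c = 0 := by
  rw [planeWave, Matrix.mul_assoc, coordInclusion_mul_apply embN_injective,
    Function.extend_apply' _ _ _ hr, Pi.zero_apply]

variable (B : Fin 3 → Matrix (I1N N n) (I1N N n) ℂ) (r : I1N N n)

lemma sum_smul_mul_planeWave_apply_last {κ : Fin N} (hκ : (κ : ℕ) = N - 1) (q : Fin (n κ)) :
    ((∑ p, s p • B p) * planeWave N n s) r ⟨κ, q⟩ = ∑ p, s p • B p r (Sum.inl ⟨κ, q⟩) := by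
  simp only [mul_planeWave_apply_last s _ r hκ, Matrix.sum_apply, Matrix.smul_apply]

lemma sum_smul_mul_planeWave_apply_lower {μ : Fin (N - 1)} {ν : Fin (N - 1 - (μ : ℕ))}
    (hν : (ν : ℕ) + 1 = N - 1 - (μ : ℕ)) (b : Fin (n μ)) :
    ((∑ p, s p • B p) * planeWave N n s) r ⟨lowerLevel μ, b⟩ =
      contractPow s fun J : Fin ((ν : ℕ) + 2) → Fin 3 =>
        B (J 0) r (Sum.inr ⟨μ, ν, Fin.tail J, b⟩) := by
  rw [Matrix.sum_mul, contractPow_fin_succ]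
  simp only [Matrix.smul_mul, Matrix.sum_apply, Matrix.smul_apply, Fin.cons_zero, Fin.tail_cons,
    mul_planeWave_apply_lower s _ r hν]

end PlaneWave

-- The left-hand side is the form in which `A0N` and `AdmissibleDN` spell out `(p, j₁, …)`.
lemma dite_zero_tail {α : Type*} {l : ℕ} (J : Fin (l + 1) → α) :
    (fun u : Fin (l + 1) => if _ : (u : ℕ) = 0 then J 0
      else Fin.tail J ⟨(u : ℕ) - 1, by have := u.isLt; omega⟩) = J := by
  ext u
  refine Fin.cases ?_ (fun v => ?_) u <;> simp [Fin.tail]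

lemma AdmissibleDN.sum_smul_mul_planeWave {D : Fin 3 → Matrix (I1N N n) (I1N N n) ℂ}
    (hD : AdmissibleDN N n D) (s : Fin 3 → ℝ) : (∑ p, s p • D p) * planeWave N n s = 0 := by
  obtain ⟨last_column, -, sum_perm, -⟩ := hD
  ext r ⟨κ, q⟩
  obtain hκ | ⟨μ, ν, hν, rfl⟩ := eq_last_or_exists_lower κ
  · simp [sum_smul_mul_planeWave_apply_last s D r hκ, last_column _ r κ q hκ]
  · rw [sum_smul_mul_planeWave_apply_lower s D r hν]
    refine contractPow_eq_zero_of_sum_perm s fun J => ?_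
    have vanishing := sum_perm (J 0) r μ ν (Fin.tail J) q hν
    rwa [dite_zero_tail] at vanishing

section PrincipalPart

variable (s : Fin 3 → ℝ)

lemma PN_apply_of_le {μ ν : Fin N} (h : (ν : ℕ) ≤ μ) (m : Fin (n μ)) (b : Fin (n ν)) :
    PN N n A A' s ⟨μ, m⟩ ⟨ν, b⟩ = contractPow s fun k => A μ ν k m b :=
  (dif_pos h).trans <| Finset.sum_congr rfl fun k _ => prod_ofReal_mul s k _

lemma PN_apply_of_eq_succ {μ ν : Fin N} (h : (ν : ℕ) = μ + 1) (m : Fin (n μ)) (b : Fin (n ν)) :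
    PN N n A A' s ⟨μ, m⟩ ⟨ν, b⟩ = A' μ m (Fin.cast (congrArg n h) b) :=
  (dif_neg (by dsimp only; omega)).trans (dif_pos h)

lemma PN_apply_of_succ_lt {μ ν : Fin N} (h : (μ : ℕ) + 1 < ν) (m : Fin (n μ)) (b : Fin (n ν)) :
    PN N n A A' s ⟨μ, m⟩ ⟨ν, b⟩ = 0 :=
  (dif_neg (by dsimp only; omega)).trans (dif_neg (by dsimp only; omega))

lemma A0N_apply_of_notMem_range (p : Fin 3) {r : I1N N n} (hr : ¬∃ w, embN N n w = r)
    (c : I1N N n) : A0N N n A A' p r c = 0 := by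
  rcases r with ⟨μ, m⟩ | ⟨μ, ν, i, m⟩
  · rw [inl_mem_range_embN_iff] at hr
    rcases c with ⟨κ, q⟩ | ⟨μc, νc, j, b⟩ <;> exact dif_neg fun h => hr h.1
  · rw [inr_mem_range_embN_iff] at hr
    rcases c with ⟨κ, q⟩ | ⟨μc, νc, j, b⟩ <;> exact dif_neg fun h => hr h.1

section TopRow

variable {μr : Fin (N - 1)} {νr : Fin (N - 1 - (μr : ℕ))}
  (hr : (νr : ℕ) + 1 = N - 1 - (μr : ℕ)) (i : Fin ((νr : ℕ) + 1) → Fin 3) (m : Fin (n μr))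

section TopColumn

variable {μc : Fin (N - 1)} {νc : Fin (N - 1 - (μc : ℕ))}
  (hc : (νc : ℕ) + 1 = N - 1 - (μc : ℕ)) (b : Fin (n μc)) (J : Fin ((νc : ℕ) + 2) → Fin 3)

include hr hc

lemma A0N_inr_inr_of_le (hle : (μc : ℕ) ≤ μr) :
    A0N N n A A' (J 0) (Sum.inr ⟨μr, νr, i, m⟩) (Sum.inr ⟨μc, νc, Fin.tail J, b⟩) =
      symDelta (L := (μr : ℕ) - μc + 1) (by omega) i (fun k => A μr μc k m b) J := by
  have levels_le : (νr : ℕ) + 1 = N - 1 - (μr : ℕ) ∧ (νc : ℕ) + 1 = N - 1 - (μc : ℕ) ∧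
      (μc : ℕ) ≤ (μr : ℕ) + 1 := ⟨hr, hc, by omega⟩
  conv_rhs => rw [← dite_zero_tail J]
  refine (dif_pos levels_le).trans ?_
  simp only [dif_pos hle]
  rfl

lemma A0N_inr_inr_of_eq_succ (h : (μc : ℕ) = μr + 1) :
    A0N N n A A' (J 0) (Sum.inr ⟨μr, νr, i, m⟩) (Sum.inr ⟨μc, νc, Fin.tail J, b⟩) =
      symDelta (L := 0) (by omega) i (fun _ => A' μr m (Fin.cast (congrArg n h) b)) J := by
  have levels_le : (νr : ℕ) + 1 = N - 1 - (μr : ℕ) ∧ (νc : ℕ) + 1 = N - 1 - (μc : ℕ) ∧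
      (μc : ℕ) ≤ (μr : ℕ) + 1 := ⟨hr, hc, by omega⟩
  conv_rhs => rw [← dite_zero_tail J]
  refine (dif_pos levels_le).trans ?_
  simp only [dif_neg (show ¬(μc : ℕ) ≤ μr by omega)]
  rfl

omit hr hc in
lemma A0N_inr_inr_of_succ_lt (h : (μr : ℕ) + 1 < μc) :
    A0N N n A A' (J 0) (Sum.inr ⟨μr, νr, i, m⟩) (Sum.inr ⟨μc, νc, Fin.tail J, b⟩) = 0 :=
  dif_neg fun h' => by omega

lemma contractPow_A0N_inr_inr :
    contractPow s (fun J : Fin ((νc : ℕ) + 2) → Fin 3 =>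
        A0N N n A A' (J 0) (Sum.inr ⟨μr, νr, i, m⟩) (Sum.inr ⟨μc, νc, Fin.tail J, b⟩)) =
      (∏ t, s (i t)) • PN N n A A' s ⟨lowerLevel μr, m⟩ ⟨lowerLevel μc, b⟩ := by
  obtain hle | h | hlt : (μc : ℕ) ≤ μr ∨ (μc : ℕ) = μr + 1 ∨ (μr : ℕ) + 1 < μc := by omega
  · simp only [A0N_inr_inr_of_le A A' hr i m hc b _ hle]
    rw [contractPow_symDelta, PN_apply_of_le A A' s (μ := lowerLevel μr) (ν := lowerLevel μc) hle]
    rfl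
  · simp only [A0N_inr_inr_of_eq_succ A A' hr i m hc b _ h]
    rw [contractPow_symDelta, contractPow_of_isEmpty,
      PN_apply_of_eq_succ A A' s (μ := lowerLevel μr) (ν := lowerLevel μc) h]
    rfl
  · simp only [A0N_inr_inr_of_succ_lt A A' i m b _ hlt]
    rw [PN_apply_of_succ_lt A A' s (μ := lowerLevel μr) (ν := lowerLevel μc) hlt]
    simp [contractPow]

end TopColumn

include hr in
lemma sum_smul_A0N_inr_inl {κ : Fin N} (hκ : (κ : ℕ) = N - 1) (q : Fin (n κ)) :
    ∑ p, s p • A0N N n A A' p (Sum.inr ⟨μr, νr, i, m⟩) (Sum.inl ⟨κ, q⟩) =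
      (∏ t, s (i t)) • PN N n A A' s ⟨lowerLevel μr, m⟩ ⟨κ, q⟩ := by
  by_cases h : (μr : ℕ) + 1 = N - 1
  · have hκμ : (κ : ℕ) = lowerLevel μr + 1 := hκ.trans h.symm
    have entry (p : Fin 3) : A0N N n A A' p (Sum.inr ⟨μr, νr, i, m⟩) (Sum.inl ⟨κ, q⟩) =
        (if i 0 = p then 1 else 0) * A' μr m (Fin.cast (congrArg n hκμ) q) :=
      dif_pos (show (νr : ℕ) + 1 = N - 1 - (μr : ℕ) ∧ (κ : ℕ) = N - 1 ∧ (μr : ℕ) + 1 = N - 1 from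
        ⟨hr, hκ, h⟩)
    have hνr : (νr : ℕ) = 0 := by omega
    have prod_eq : ∏ t, s (i t) = s (i 0) := by
      refine Fintype.prod_eq_single 0 fun t ht => ?_
      exact absurd (Fin.ext (by omega)) ht
    simp [entry, prod_eq, PN_apply_of_eq_succ A A' s hκμ]
  · have entry (p : Fin 3) :
        A0N N n A A' p (Sum.inr ⟨μr, νr, i, m⟩) (Sum.inl ⟨κ, q⟩) = 0 := dif_neg fun h' => h h'.2.2
    rw [PN_apply_of_succ_lt A A' s (by dsimp only [Fin.val_castLE]; omega)]
    simp [entry]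

end TopRow

section LastRow

variable {μ : Fin N} (hμ : (μ : ℕ) = N - 1) (m : Fin (n μ))

include hμ

lemma contractPow_A0N_inl_inr {μc : Fin (N - 1)} {νc : Fin (N - 1 - (μc : ℕ))}
    (hc : (νc : ℕ) + 1 = N - 1 - (μc : ℕ)) (b : Fin (n μc)) :
    contractPow s (fun J : Fin ((νc : ℕ) + 2) → Fin 3 =>
        A0N N n A A' (J 0) (Sum.inl ⟨μ, m⟩) (Sum.inr ⟨μc, νc, Fin.tail J, b⟩)) =
      PN N n A A' s ⟨μ, m⟩ ⟨lowerLevel μc, b⟩ := by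
  obtain ⟨μ, hμN⟩ := μ
  obtain rfl : μ = N - 1 := hμ
  have hL : N - 1 - (μc : ℕ) + 1 = (νc : ℕ) + 2 := by omega
  have entry (J : Fin ((νc : ℕ) + 2) → Fin 3) :
      A0N N n A A' (J 0) (Sum.inl ⟨⟨N - 1, hμN⟩, m⟩) (Sum.inr ⟨μc, νc, Fin.tail J, b⟩) =
        A (N - 1) μc (J ∘ finCongr hL) m b := by
    conv_rhs => rw [← dite_zero_tail J]
    exact dif_pos (show N - 1 = N - 1 ∧ (νc : ℕ) + 1 = N - 1 - (μc : ℕ) from ⟨rfl, hc⟩)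
  simp only [entry]
  rw [contractPow_comp_equiv s (finCongr hL) fun k => A (N - 1) μc k m b]
  refine (PN_apply_of_le A A' s (ν := lowerLevel μc) ?_ m b).symm
  dsimp only [Fin.val_castLE]
  omega

lemma sum_smul_A0N_inl_inl {κ : Fin N} (hκ : (κ : ℕ) = N - 1) (q : Fin (n κ)) :
    ∑ p, s p • A0N N n A A' p (Sum.inl ⟨μ, m⟩) (Sum.inl ⟨κ, q⟩) =
      PN N n A A' s ⟨μ, m⟩ ⟨κ, q⟩ := by
  obtain rfl : κ = μ := Fin.ext (hκ.trans hμ.symm)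
  obtain ⟨κ, hκN⟩ := κ
  obtain rfl : κ = N - 1 := hκ
  have entry (p : Fin 3) :
      A0N N n A A' p (Sum.inl ⟨⟨N - 1, hκN⟩, m⟩) (Sum.inl ⟨⟨N - 1, hκN⟩, q⟩) =
        A (N - 1) (N - 1) (fun _ => p) m q := dif_pos ⟨rfl, rfl⟩
  have : Unique (Fin (N - 1 - (N - 1) + 1)) := (finCongr (by omega : _ = 1)).unique
  rw [PN_apply_of_le A A' s le_rfl, contractPow_of_unique]
  simp only [entry]

end LastRow

lemma sum_smul_A0N_mul_planeWave :
    (∑ p, s p • A0N N n A A' p) * planeWave N n s = planeWave N n s * PN N n A A' s := by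
  ext r ⟨κ, q⟩
  by_cases hr : ∃ w, embN N n w = r
  · obtain ⟨w, rfl⟩ := hr
    induction w using IWN_cases with
    | last μ i m hμ =>
      rw [embN_last hμ, planeWave_mul_apply_last s _ hμ]
      obtain hκ | ⟨μc, νc, hc, rfl⟩ := eq_last_or_exists_lower κ
      · rw [sum_smul_mul_planeWave_apply_last s _ _ hκ]
        exact sum_smul_A0N_inl_inl A A' s hμ m hκ q
      · rw [sum_smul_mul_planeWave_apply_lower s _ _ hc]
        exact contractPow_A0N_inl_inr A A' s hμ m hc q
    | lower μr νr i m hν =>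
      rw [embN_lower hν, planeWave_mul_apply_lower s _ hν]
      obtain hκ | ⟨μc, νc, hc, rfl⟩ := eq_last_or_exists_lower κ
      · rw [sum_smul_mul_planeWave_apply_last s _ _ hκ]
        exact sum_smul_A0N_inr_inl A A' s hν i m hκ q
      · rw [sum_smul_mul_planeWave_apply_lower s _ _ hc]
        exact contractPow_A0N_inr_inr A A' s hν i m hc q
  · rw [planeWave_mul_apply_of_notMem_range s _ hr]
    simp [Matrix.mul_apply, Matrix.sum_apply, A0N_apply_of_notMem_range A A' _ hr]

variable {A A'} in
lemma AdmissibleDN.sum_smul_add_mul_planeWave {D : Fin 3 → Matrix (I1N N n) (I1N N n) ℂ}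
    (hD : AdmissibleDN N n D) :
    (∑ p, s p • (A0N N n A A' p + D p)) * planeWave N n s =
      planeWave N n s * PN N n A A' s := by
  simp only [smul_add, Finset.sum_add_distrib, Matrix.add_mul, hD.sum_smul_mul_planeWave, add_zero,
    sum_smul_A0N_mul_planeWave]

end PrincipalPart

end Symbols

/-- for `N ≥ 2`, first-order symmetric hyperbolicity implies FTNS symmetric
hyperbolicity: if `H₁` is a Hermitian symmetrizer, positive definite on the first-order
state space, of a direct first-order reduction `A₁^p = A₀^p + D^p`, then its diagonal
block `H₂₂` over the top-level variables `(d⁰, …, d^{N-2}, v^{N-1})` is an FTNS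
symmetrizer. -/
theorem stmt_6 (hN : 2 ≤ N)
    (D : Fin 3 → Matrix (I1N N n) (I1N N n) ℂ) (hD : AdmissibleDN N n D)
    (H1 : Matrix (I1N N n) (I1N N n) ℂ)
    (hH1herm : H1.IsHermitian)
    (hH1pos : ∀ x : I1N N n → ℂ,
      (∀ (μ : Fin (N - 1)) (ν : Fin (N - 1 - (μ : ℕ))) (i : Fin ((ν : ℕ) + 1) → Fin 3)
          (m : Fin (n μ)) (σ : Equiv.Perm (Fin ((ν : ℕ) + 1))),
        x (Sum.inr ⟨μ, ν, i ∘ σ, m⟩) = x (Sum.inr ⟨μ, ν, i, m⟩)) →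
      x ≠ 0 → 0 < (star x ⬝ᵥ (H1 *ᵥ x)).re)
    (hHA : ∀ p, (H1 * (A0N N n A A' p + D p)).IsHermitian) :
    (H1.submatrix (embN N n) (embN N n)).IsHermitian ∧
    (∀ y : IWN N n → ℂ,
      (∀ (μ : Fin N) (i : Fin (N - 1 - (μ : ℕ)) → Fin 3) (a : Fin (n μ))
          (σ : Equiv.Perm (Fin (N - 1 - (μ : ℕ)))),
        y ⟨μ, (i ∘ σ, a)⟩ = y ⟨μ, (i, a)⟩) →
      y ≠ 0 → 0 < (star y ⬝ᵥ ((H1.submatrix (embN N n) (embN N n)) *ᵥ y)).re) ∧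
    (∀ s : Fin 3 → ℝ, (∑ i, s i ^ 2) = 1 →
      ((iotaN N n s)ᴴ * H1.submatrix (embN N n) (embN N n) * iotaN N n s *
        PN N n A A' s).IsHermitian) := by
  refine ⟨hH1herm.submatrix _, fun y hy hy0 => ?_, fun s _ => ?_⟩
  · have extend_ne_zero : Function.extend (embN N n) y 0 ≠ 0 := fun h => hy0 <| funext fun w => by
      simpa [embN_injective.extend_apply] using congrFun h (embN N n w)
    rw [star_dotProduct_submatrix_mulVec embN_injective]
    exact hH1pos _ (extend_embN_perm hy) extend_ne_zero
  · exact isHermitian_compression_mul_of_intertwines (isHermitian_mul_sum_smul hHA s)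
      (hD.sum_smul_add_mul_planeWave s)
end
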